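/- For every ε > 0 and every real p with 0 < p < 1 there exist b, d, δ > 0 such that for every n₀ there exist n ≥ n₀ and a (b,d)-expander 𝒢 on n vertices with a prescribed vertex v for which the random graph G ∼ 𝒢_p satisfies both: (i) the probability that the diameter of the connected component of v in G is at least (1−ε) times the diameter of 𝒢 is at least 1 − ε; and (ii) the probability that every connected component of G has at most n^{1−δ} vertices is at least 1 − ε. -/

import Mathlib

open scoped Classical symmDiff

noncomputable section

namespace Percolation

variable {V : Type} [Fintype V] [DecidableEq V]

/-- The edge set of `G` as a finset. -/
noncomputable def edgeFinset' (G : SimpleGraph V) : Finset (Sym2 V) :=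
  Finset.univ.filter (· ∈ G.edgeSet)

/-- Probability that bond percolation on `G` with parameter `p` produces a spanning
subgraph satisfying `P`. -/
noncomputable def percProb (G : SimpleGraph V) (p : ℝ) (P : SimpleGraph V → Prop) : ℝ :=
  ∑ s ∈ (edgeFinset' G).powerset,
    (p ^ s.card * (1 - p) ^ ((edgeFinset' G).card - s.card)) *
      (if P (SimpleGraph.fromEdgeSet (↑s)) then 1 else 0)

/-- Joint probability for two independent bond percolations on `G`. -/
noncomputable def percProb2 (G : SimpleGraph V) (p₁ p₂ : ℝ)
    (P : SimpleGraph V → SimpleGraph V → Prop) : ℝ :=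
  ∑ s ∈ (edgeFinset' G).powerset, ∑ t ∈ (edgeFinset' G).powerset,
    (p₁ ^ s.card * (1 - p₁) ^ ((edgeFinset' G).card - s.card)) *
    (p₂ ^ t.card * (1 - p₂) ^ ((edgeFinset' G).card - t.card)) *
      (if P (SimpleGraph.fromEdgeSet (↑s)) (SimpleGraph.fromEdgeSet (↑t)) then 1 else 0)

/-- Number of edges of `G` joining `S` to its complement. -/
noncomputable def cutCard (G : SimpleGraph V) (S : Finset V) : ℕ :=
  ((edgeFinset' G).filter (fun e => ∃ x ∈ S, ∃ y, y ∉ S ∧ e = s(x, y))).card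

/-- `G` is a `(b,d)`-expander: max degree at most `d`, and every vertex set of size at most
`n/2` has at least `b|S|` edges to its complement. -/
def IsExpander (G : SimpleGraph V) (b : ℝ) (d : ℕ) : Prop :=
  (∀ v, (G.neighborSet v).ncard ≤ d) ∧
  ∀ S : Finset V, (S.card : ℝ) ≤ Fintype.card V / 2 → b * S.card ≤ cutCard G S

/-- `G` is a regular `(b,d)`-expander. -/
def IsRegularExpander (G : SimpleGraph V) (b : ℝ) (d : ℕ) : Prop :=
  IsExpander G b d ∧ ∀ v, (G.neighborSet v).ncard = d

/-- The vertices of the connected component `c` of `G`. -/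
noncomputable def compVerts (G : SimpleGraph V) (c : G.ConnectedComponent) : Finset V :=
  Finset.univ.filter (fun v => G.connectedComponentMk v = c)

/-- The edges of the connected component `c` of `G`. -/
noncomputable def compEdges (G : SimpleGraph V) (c : G.ConnectedComponent) : Finset (Sym2 V) :=
  (edgeFinset' G).filter (fun e => ∀ v ∈ e, G.connectedComponentMk v = c)

/-- `c` is a largest connected component of `G`. -/
def IsLargestComp (G : SimpleGraph V) (c : G.ConnectedComponent) : Prop :=
  ∀ c' : G.ConnectedComponent, (compVerts G c').card ≤ (compVerts G c).card

/-- The 2-core of the connected component `c` of `G` : the maximal subgraph of `G`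
supported inside `c` all of whose vertices have degree at least 2. -/
noncomputable def twoCoreComp (G : SimpleGraph V) (c : G.ConnectedComponent) : SimpleGraph V :=
  sSup {H : SimpleGraph V | H ≤ G ∧ (∀ v ∈ H.support, G.connectedComponentMk v = c) ∧
    ∀ v ∈ H.support, 2 ≤ (H.neighborSet v).ncard}

/-- The event `A^R_{x,y}(H)`: the connected component of `y` in `H` with the edge `xy`
removed (if present) has at least `R` vertices. -/
def eventA (H : SimpleGraph V) (R : ℕ) (x y : V) : Prop :=
  R ≤ (compVerts (H.deleteEdges {s(x, y)})
        ((H.deleteEdges {s(x, y)}).connectedComponentMk y)).card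

/-- `E₁(H)`: edges `xy` of `H` such that `A^R_{x,y}` or `A^R_{y,x}` holds. -/
noncomputable def E1set (H : SimpleGraph V) (R : ℕ) : Finset (Sym2 V) :=
  (edgeFinset' H).filter (fun e => ∃ x y, e = s(x, y) ∧ (eventA H R x y ∨ eventA H R y x))

/-- `V₁(H)`: vertices `x` such that for some `y`, `xy ∈ E(H)` and `A^R_{x,y}` holds. -/
noncomputable def V1set (H : SimpleGraph V) (R : ℕ) : Finset V :=
  Finset.univ.filter (fun x => ∃ y, H.Adj x y ∧ eventA H R x y)

/-- `E₂(H)`: edges `xy` of `H` such that both `A^R_{x,y}` and `A^R_{y,x}` hold. -/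
noncomputable def E2set (H : SimpleGraph V) (R : ℕ) : Finset (Sym2 V) :=
  (edgeFinset' H).filter (fun e => ∃ x y, e = s(x, y) ∧ eventA H R x y ∧ eventA H R y x)

/-- `V₂(H)`: vertices incident to an edge of `E₂(H)`. -/
noncomputable def V2set (H : SimpleGraph V) (R : ℕ) : Finset V :=
  Finset.univ.filter (fun x => ∃ e ∈ E2set H R, x ∈ e)

/-- `V̄₁(H)`: vertices `y` such that `A^R_{x,y}(H)` holds for some `x`. -/
noncomputable def Vbar1 (H : SimpleGraph V) (R : ℕ) : Finset V :=
  Finset.univ.filter (fun y => ∃ x, eventA H R x y)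

/-- `S` is `k`-thick in `H`: a union of pairwise disjoint subsets, each of size at least
`k`, each inducing a connected subgraph of `H`. -/
def IsThick (H : SimpleGraph V) (k : ℕ) (S : Finset V) : Prop :=
  ∃ P : Finset (Finset V),
    (∀ T ∈ P, k ≤ T.card ∧ (H.induce (↑T : Set V)).Connected) ∧
    (↑P : Set (Finset V)).PairwiseDisjoint id ∧ S = P.biUnion id

/-- `S` is a separator of `K`. -/
def IsSeparator {W : Type} [Fintype W] (K : SimpleGraph W) (S : Finset W) : Prop :=
  ∃ A B : Finset W, Disjoint A B ∧ Disjoint A S ∧ Disjoint B S ∧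
    (∀ w, w ∈ A ∨ w ∈ B ∨ w ∈ S) ∧
    (∀ a ∈ A, ∀ b ∈ B, ¬ K.Adj a b) ∧
    3 * A.card ≤ 2 * Fintype.card W ∧ 3 * B.card ≤ 2 * Fintype.card W

/-! Take a binary tree of depth `h`, stretch every node into a path of `m + 1` clusters of `K`
vertices, join consecutive clusters completely, and glue the leaves to distinct points of an
expander on `16 ^ h` points whose edges are subdivided into paths of `q + 3` edges. The result is a
bounded degree expander: a tree expands if its leaves are charged to the base, and a base given by
`30` permutations expands for all but few choices of the permutations.

All base points are within `O(q h)` of each other, so for `m` large compared with `q / ε` the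
diameter is at most `(1 + ε) (m + 1) h`. If `K` is large then percolation leaves, with probability
at least `1 - ε`, a path from a vertex at the bottom of a stem above the root to some leaf. Its
component has diameter at least `(m + 1) h`, as no edge increases the depth by more than one.

If `q` is large then percolation on the subdivided base is subcritical. Its clusters have bounded
mean size, so with high probability all of them have at most `c * 4 ^ h` points, the square root of
the size of the base up to a constant. A component of the whole graph consists of at most the tree
and the clusters which its `2 ^ h * K` leaves touch, in all `O(8 ^ h)` vertices, while the graph has
at least `16 ^ h`: whence `δ = 1 / 8`. -/

section RandomSubset

variable {α : Type*}

/-- Expectation of `f` over the random subset of `E` that keeps each element independently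
with probability `p`. -/
def bernExp (p : ℝ) (E : Finset α) (f : Finset α → ℝ) : ℝ :=
  ∑ s ∈ E.powerset, (p ^ s.card * (1 - p) ^ (E.card - s.card)) * f s

/-- Probability that the random subset of `E` that keeps each element independently with
probability `p` satisfies `P`. -/
def bernProb (p : ℝ) (E : Finset α) (P : Finset α → Prop) : ℝ :=
  bernExp p E fun s => if P s then 1 else 0

lemma bernExp_add (p : ℝ) (E : Finset α) (f g : Finset α → ℝ) :
    bernExp p E (fun s => f s + g s) = bernExp p E f + bernExp p E g := by
  simp only [bernExp, mul_add, Finset.sum_add_distrib]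

lemma bernExp_const_mul (p c : ℝ) (E : Finset α) (f : Finset α → ℝ) :
    bernExp p E (fun s => c * f s) = c * bernExp p E f := by
  simp only [bernExp, Finset.mul_sum]
  exact Finset.sum_congr rfl fun s _ => by ring

lemma bernExp_sum {ι : Type*} (p : ℝ) (E : Finset α) (t : Finset ι) (f : ι → Finset α → ℝ) :
    bernExp p E (fun s => ∑ i ∈ t, f i s) = ∑ i ∈ t, bernExp p E (f i) := by
  simp only [bernExp, Finset.mul_sum]
  exact Finset.sum_comm

lemma bernExp_mono {p : ℝ} (hp0 : 0 ≤ p) (hp1 : p ≤ 1) {E : Finset α} {f g : Finset α → ℝ}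
    (h : ∀ s ⊆ E, f s ≤ g s) : bernExp p E f ≤ bernExp p E g :=
  Finset.sum_le_sum fun s hs => mul_le_mul_of_nonneg_left (h s (Finset.mem_powerset.1 hs))
    (mul_nonneg (pow_nonneg hp0 _) (pow_nonneg (sub_nonneg.2 hp1) _))

lemma bernExp_empty (p : ℝ) (f : Finset α → ℝ) : bernExp p ∅ f = f ∅ := by
  simp [bernExp]

lemma bernProb_congr (p : ℝ) {E : Finset α} {P Q : Finset α → Prop} (h : ∀ s ⊆ E, P s ↔ Q s) :
    bernProb p E P = bernProb p E Q :=
  Finset.sum_congr rfl fun s hs => by simp only [h s (Finset.mem_powerset.1 hs)]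

lemma bernProb_mono {p : ℝ} (hp0 : 0 ≤ p) (hp1 : p ≤ 1) {E : Finset α} {P Q : Finset α → Prop}
    (h : ∀ s ⊆ E, P s → Q s) : bernProb p E P ≤ bernProb p E Q :=
  bernExp_mono hp0 hp1 fun s hs => by
    split_ifs with hP hQ hQ
    exacts [le_rfl, absurd (h s hs hP) hQ, zero_le_one, le_rfl]

lemma bernProb_or_le {p : ℝ} (hp0 : 0 ≤ p) (hp1 : p ≤ 1) (E : Finset α) (P Q : Finset α → Prop) :
    bernProb p E (fun s => P s ∨ Q s) ≤ bernProb p E P + bernProb p E Q := by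
  simp only [bernProb, ← bernExp_add]
  refine bernExp_mono hp0 hp1 fun s _ => ?_
  by_cases hP : P s <;> by_cases hQ : Q s <;> simp [hP, hQ]

lemma bernProb_exists_le {ι : Type*} {p : ℝ} (hp0 : 0 ≤ p) (hp1 : p ≤ 1) (E : Finset α)
    (t : Finset ι) (P : ι → Finset α → Prop) :
    bernProb p E (fun s => ∃ i ∈ t, P i s) ≤ ∑ i ∈ t, bernProb p E (P i) := by
  simp only [bernProb, ← bernExp_sum]
  refine bernExp_mono hp0 hp1 fun s _ => ?_
  have indicator_nonneg : ∀ i ∈ t, (0 : ℝ) ≤ if P i s then 1 else 0 := fun i _ => by positivity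
  split_ifs with h
  · obtain ⟨i, hi, hP⟩ := h
    simpa only [hP, if_true] using Finset.single_le_sum indicator_nonneg hi
  · exact Finset.sum_nonneg indicator_nonneg

lemma bernExp_const (p c : ℝ) (E : Finset α) : bernExp p E (fun _ => c) = c := by
  rw [bernExp, ← Finset.sum_mul, Finset.sum_pow_mul_eq_add_pow, add_sub_cancel, one_pow, one_mul]

lemma bernProb_true (p : ℝ) (E : Finset α) : bernProb p E (fun _ => True) = 1 := by
  simp only [bernProb, if_true, bernExp_const]

lemma bernProb_false (p : ℝ) (E : Finset α) : bernProb p E (fun _ => False) = 0 := by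
  simp only [bernProb, if_false, bernExp_const]

lemma bernProb_nonneg {p : ℝ} (hp0 : 0 ≤ p) (hp1 : p ≤ 1) (E : Finset α) (P : Finset α → Prop) :
    0 ≤ bernProb p E P :=
  (bernProb_false p E).ge.trans (bernProb_mono hp0 hp1 fun _ _ => False.elim)

lemma bernProb_not (p : ℝ) (E : Finset α) (P : Finset α → Prop) :
    bernProb p E (fun s => ¬ P s) = 1 - bernProb p E P := by
  rw [eq_sub_iff_add_eq, bernProb, bernProb, ← bernExp_add]
  convert bernExp_const p 1 E with s
  by_cases h : P s <;> simp [h]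

lemma bernProb_lt_le_div {p : ℝ} (hp0 : 0 ≤ p) (hp1 : p ≤ 1) {E : Finset α} {f : Finset α → ℝ}
    (hf : ∀ s, 0 ≤ f s) {c : ℝ} (hc : 0 < c) :
    bernProb p E (fun s => c < f s) ≤ bernExp p E f / c := by
  rw [div_eq_inv_mul, ← bernExp_const_mul]
  refine bernExp_mono hp0 hp1 fun s _ => ?_
  rw [← div_eq_inv_mul]
  split_ifs with h
  · exact (one_le_div hc).2 h.le
  · exact div_nonneg (hf s) hc.le

variable [DecidableEq α]

lemma bernExp_insert (p : ℝ) {E : Finset α} {e : α} (he : e ∉ E) (f : Finset α → ℝ) :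
    bernExp p (insert e E) f =
      p * bernExp p E (fun s => f (insert e s)) + (1 - p) * bernExp p E f := by
  simp only [bernExp, Finset.sum_powerset_insert he, Finset.card_insert_of_notMem he,
    Finset.mul_sum]
  rw [add_comm]
  congr 1 <;> refine Finset.sum_congr rfl fun s hs => ?_ <;> rw [Finset.mem_powerset] at hs
  · rw [Finset.card_insert_of_notMem fun h => he (hs h), Nat.add_sub_add_right, pow_succ]
    ring
  · rw [Nat.sub_add_comm (Finset.card_le_card hs), pow_succ]
    ring

/-- `f` does not depend on whether `e` belongs to its argument. -/
def Ignores {β : Sort*} (f : Finset α → β) (e : α) : Prop := ∀ s, f (insert e s) = f s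

lemma Ignores.comp_insert {β : Sort*} {f : Finset α → β} {e : α} (h : Ignores f e) (e' : α) :
    Ignores (fun s => f (insert e' s)) e := fun s => by
  simp only [Finset.insert_comm e' e s, h (insert e' s)]

lemma Ignores.comp {β γ : Sort*} {f : Finset α → β} {e : α} (h : Ignores f e) (g : β → γ) :
    Ignores (fun s => g (f s)) e := fun s => congrArg g (h s)

lemma ignores_mem {e e' : α} (h : e ≠ e') : Ignores (fun s => e ∈ s) e' := fun s => by
  simp only [Finset.mem_insert, h, false_or]

lemma ignores_subset {F : Finset α} {e : α} (h : e ∉ F) : Ignores (fun s => F ⊆ s) e := fun s => by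
  simp only [Finset.subset_insert_iff_of_notMem h]

lemma ignores_disjoint {F : Finset α} {e : α} (h : e ∉ F) : Ignores (fun s => Disjoint F s) e :=
  fun s => by simp only [Finset.disjoint_insert_right, h, not_false_eq_true, true_and]

lemma bernExp_mul_of_ignores (p : ℝ) (E : Finset α) {f g : Finset α → ℝ}
    (h : ∀ e, Ignores f e ∨ Ignores g e) :
    bernExp p E (fun s => f s * g s) = bernExp p E f * bernExp p E g := by
  induction E using Finset.induction_on generalizing f g with
  | empty => simp only [bernExp_empty]
  | insert e E he ih =>
    simp only [bernExp_insert p he]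
    rcases h e with hf | hg
    · simp only [hf _]
      rw [ih h, ih fun e' => (h e').imp_right fun h' => h'.comp_insert e]
      ring
    · simp only [hg _]
      rw [ih h, ih fun e' => (h e').imp_left fun h' => h'.comp_insert e]
      ring

lemma bernProb_and_of_ignores (p : ℝ) (E : Finset α) {P Q : Finset α → Prop}
    (h : ∀ e, Ignores P e ∨ Ignores Q e) :
    bernProb p E (fun s => P s ∧ Q s) = bernProb p E P * bernProb p E Q := by
  rw [bernProb, bernProb, bernProb, ← bernExp_mul_of_ignores p E fun e =>
    (h e).imp (fun hP => hP.comp fun a => if a then (1 : ℝ) else 0)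
      (fun hQ => hQ.comp fun a => if a then (1 : ℝ) else 0)]
  congr 1 with s
  by_cases hP : P s <;> simp [hP]

omit [DecidableEq α] in
lemma bernProb_mem (p : ℝ) {E : Finset α} {e : α} (he : e ∈ E) :
    bernProb p E (fun s => e ∈ s) = p := by
  have notMem : e ∉ E.erase e := Finset.notMem_erase e E
  have prob_erase : bernProb p (E.erase e) (fun s => e ∈ s) = 0 :=
    (bernProb_congr p fun s hs => iff_false_intro fun h => notMem (hs h)).trans
      (bernProb_false p _)
  rw [bernProb] at prob_erase ⊢
  rw [← Finset.insert_erase he, bernExp_insert p notMem, prob_erase]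
  simp only [Finset.mem_insert_self, if_true, bernExp_const, mul_one, mul_zero, add_zero]

omit [DecidableEq α] in
lemma bernProb_subset (p : ℝ) {E F : Finset α} (hF : F ⊆ E) :
    bernProb p E (fun s => F ⊆ s) = p ^ F.card := by
  induction F using Finset.induction_on with
  | empty => simp only [Finset.empty_subset, bernProb_true, Finset.card_empty, pow_zero]
  | insert e F he ih =>
    obtain ⟨heE, hFE⟩ := Finset.insert_subset_iff.1 hF
    simp only [Finset.insert_subset_iff]
    rw [bernProb_and_of_ignores, bernProb_mem p heE, ih hFE, Finset.card_insert_of_notMem he,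
      pow_succ']
    intro e'
    rcases eq_or_ne e e' with rfl | hne
    · exact Or.inr (ignores_subset he)
    · exact Or.inl (ignores_mem hne)

omit [DecidableEq α] in
lemma bernProb_disjoint (p : ℝ) {E F : Finset α} (hF : F ⊆ E) :
    bernProb p E (fun s => Disjoint F s) = (1 - p) ^ F.card := by
  induction F using Finset.induction_on with
  | empty => simp only [Finset.disjoint_empty_left, bernProb_true, Finset.card_empty, pow_zero]
  | insert e F he ih =>
    obtain ⟨heE, hFE⟩ := Finset.insert_subset_iff.1 hF
    simp only [Finset.disjoint_insert_left]
    rw [bernProb_and_of_ignores, bernProb_not, bernProb_mem p heE, ih hFE,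
      Finset.card_insert_of_notMem he, pow_succ']
    intro e'
    rcases eq_or_ne e e' with rfl | hne
    · exact Or.inr (ignores_disjoint he)
    · exact Or.inl ((ignores_mem hne).comp Not)

lemma bernExp_subset_mul (p : ℝ) {E F : Finset α} (hF : F ⊆ E) {g : Finset α → ℝ}
    (hg : ∀ e ∈ F, Ignores g e) :
    bernExp p E (fun s => (if F ⊆ s then 1 else 0) * g s) = p ^ F.card * bernExp p E g := by
  rw [bernExp_mul_of_ignores, ← bernProb_subset p hF, bernProb]
  · congr!
  · intro e
    by_cases he : e ∈ F
    · exact Or.inr (hg e he)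
    · exact Or.inl fun s => by simp only [Finset.subset_insert_iff_of_notMem he]

end RandomSubset

section ExpandingPermutations

open Finset

lemma card_perm_eqOn {α : Type*} [Fintype α] [DecidableEq α] (S : Finset α) (τ : Equiv.Perm α) :
    #{σ : Equiv.Perm α | ∀ x ∈ S, σ x = τ x} = (Fintype.card α - #S).factorial := by
  have card_fixing : #{σ : Equiv.Perm α | ∀ x ∈ S, σ x = x} =
      (Fintype.card α - #S).factorial := by
    rw [← Fintype.card_subtype, ← Fintype.card_coe S, ← Fintype.card_subtype_compl,
      ← Fintype.card_perm, Fintype.card_congr (Equiv.Perm.subtypeEquivSubtypePerm (· ∉ S))]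
    simp only [not_not]
  rw [← card_fixing]
  refine card_equiv (Equiv.mulLeft τ⁻¹) fun σ => ?_
  simp only [mem_filter_univ, Equiv.coe_mulLeft, Equiv.Perm.mul_apply, Equiv.Perm.inv_eq_iff_eq]

lemma card_perm_mapsTo_le {α : Type*} [Fintype α] [DecidableEq α] (S T : Finset α) :
    #{σ : Equiv.Perm α | ∀ x ∈ S, σ x ∈ T} ≤
      (Fintype.card α - #S).factorial * (#T).descFactorial #S := by
  let restrict : {σ : Equiv.Perm α // ∀ x ∈ S, σ x ∈ T} → (S ↪ T) := fun σ =>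
    ⟨fun x => ⟨σ.1 x, σ.2 x x.2⟩, fun x y h =>
      Subtype.ext (σ.1.injective (congrArg Subtype.val h))⟩
  have card_fiber_le : ∀ b ∈ univ, #{σ | restrict σ = b} ≤ (Fintype.card α - #S).factorial := by
    intro b _
    rcases (univ.filter fun σ => restrict σ = b).eq_empty_or_nonempty with h | ⟨τ, hτ⟩
    · rw [h, card_empty]
      exact Nat.zero_le _
    · rw [← card_perm_eqOn S τ.1]
      refine card_le_card_of_injOn Subtype.val (fun σ hσ => ?_) Subtype.val_injective.injOn
      simp only [mem_coe, mem_filter_univ] at hσ hτ ⊢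
      exact fun x hx => congrArg Subtype.val (DFunLike.congr_fun (hσ.trans hτ.symm) ⟨x, hx⟩)
  have card_le := card_le_mul_card_image_of_maps_to (s := univ) (fun _ _ => mem_univ _) _
    card_fiber_le
  rwa [card_univ, card_univ, Fintype.card_subtype, Fintype.card_embedding_eq, Fintype.card_coe,
    Fintype.card_coe] at card_le

lemma descFactorial_mul_pow_le {t n : ℕ} (h : t ≤ n) (s : ℕ) :
    t.descFactorial s * n ^ s ≤ t ^ s * n.descFactorial s := by
  induction s with
  | zero => rfl
  | succ s ih =>
    have factor_le : (t - s) * n ≤ t * (n - s) := by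
      rw [Nat.sub_mul, Nat.mul_sub, mul_comm t s]
      exact Nat.sub_le_sub_left (Nat.mul_le_mul_left s h) _
    rw [Nat.descFactorial_succ, Nat.descFactorial_succ, pow_succ, pow_succ]
    calc (t - s) * t.descFactorial s * (n ^ s * n)
        = ((t - s) * n) * (t.descFactorial s * n ^ s) := by ring
      _ ≤ (t * (n - s)) * (t ^ s * n.descFactorial s) := Nat.mul_le_mul factor_le ih
      _ = t ^ s * t * ((n - s) * n.descFactorial s) := by ring

lemma card_perm_mapsTo_mul_pow_le {α : Type*} [Fintype α] [DecidableEq α] (S T : Finset α) :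
    #{σ : Equiv.Perm α | ∀ x ∈ S, σ x ∈ T} * Fintype.card α ^ #S ≤
      (Fintype.card α).factorial * #T ^ #S := by
  calc _ ≤ (Fintype.card α - #S).factorial * (#T).descFactorial #S * Fintype.card α ^ #S :=
        Nat.mul_le_mul_right _ (card_perm_mapsTo_le S T)
    _ ≤ (Fintype.card α - #S).factorial * (#T ^ #S * (Fintype.card α).descFactorial #S) := by
        rw [mul_assoc]
        exact Nat.mul_le_mul_left _ (descFactorial_mul_pow_le (card_le_univ T) _)
    _ = (Fintype.card α).factorial * #T ^ #S := by
        rw [← Nat.factorial_mul_descFactorial (card_le_univ S)]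
        ring

lemma choose_le_three_mul_div_pow (n k : ℕ) : (n.choose k : ℝ) ≤ (3 * n / k) ^ k := by
  rcases k.eq_zero_or_pos with rfl | hk
  · simp
  have hk' : (0 : ℝ) < k := Nat.cast_pos.2 hk
  have pow_div_factorial_le : (k : ℝ) ^ k / k.factorial ≤ 3 ^ k := by
    refine (Real.pow_div_factorial_le_exp k hk'.le k).trans ?_
    rw [← Real.exp_one_pow]
    exact pow_le_pow_left₀ (Real.exp_pos 1).le (Real.exp_one_lt_d9.le.trans (by norm_num)) k
  calc (n.choose k : ℝ) ≤ n ^ k / k.factorial := Nat.choose_le_pow_div k n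
    _ = (n / k) ^ k * (k ^ k / k.factorial) := by rw [div_pow]; field_simp
    _ ≤ (n / k) ^ k * 3 ^ k := by gcongr
    _ = (3 * n / k) ^ k := by rw [← mul_pow]; ring

lemma choose_mul_choose_mul_pow_le {n s : ℕ} (hs : 0 < s) (hsn : 2 * s ≤ n) :
    (n.choose s : ℝ) * n.choose (s + s / 2) * (((s + s / 2 : ℕ) / n : ℝ) ^ s) ^ 30 ≤
      (1 / 4) ^ s := by
  have hs' : (0 : ℝ) < s := Nat.cast_pos.2 hs
  have hn : (0 : ℝ) < n := Nat.cast_pos.2 (by omega)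
  have hsn' : (2 * s : ℝ) ≤ n := by exact_mod_cast hsn
  set y : ℝ := s / n with hy
  have y_pos : 0 < y := div_pos hs' hn
  have y_le : y ≤ 1 / 2 := by rw [hy, div_le_iff₀ hn]; linarith
  have inv_y : (3 * n / s : ℝ) = 3 / y := by rw [hy]; field_simp
  have choose_le : (n.choose s : ℝ) ≤ (3 / y) ^ s := inv_y ▸ choose_le_three_mul_div_pow n s
  have choose_le' : (n.choose (s + s / 2) : ℝ) ≤ (3 / y) ^ (2 * s) :=
    calc (n.choose (s + s / 2) : ℝ) ≤ (3 * n / (s + s / 2 : ℕ)) ^ (s + s / 2) :=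
          choose_le_three_mul_div_pow n _
      _ ≤ (3 / y) ^ (s + s / 2) := by
          rw [← inv_y]
          gcongr
          exact Nat.le_add_right _ _
      _ ≤ (3 / y) ^ (2 * s) :=
          pow_le_pow_right₀ ((one_le_div y_pos).2 (by linarith)) (by omega)
  have ratio_le : ((s + s / 2 : ℕ) : ℝ) / n ≤ 3 / 2 * y := by
    have : (2 * (s + s / 2 : ℕ) : ℝ) ≤ 3 * s := by exact_mod_cast (by omega)
    rw [hy, ← mul_div_assoc]
    gcongr
    linarith
  calc _ ≤ (3 / y) ^ s * (3 / y) ^ (2 * s) * ((3 / 2 * y) ^ s) ^ 30 := by gcongr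
    _ = (27 * (27 / 8) * (3 / 2 * y) ^ 27) ^ s := by
      rw [← pow_mul, mul_comm s 30, pow_mul, pow_mul, ← mul_pow, ← mul_pow]
      congr 1
      field_simp
      ring
    _ ≤ (27 * (27 / 8) * (3 / 2 * (1 / 2)) ^ 27) ^ s := by gcongr
    _ ≤ (1 / 4) ^ s := pow_le_pow_left₀ (by norm_num) (by norm_num) s

variable {X ι : Type*} [Fintype X] [DecidableEq X] [Fintype ι]

/-- The permutations `π i` jointly expand every set of at most half of the points by a factor
`3 / 2`. -/
def IsExpandingFamily (π : ι → Equiv.Perm X) : Prop :=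
  ∀ S : Finset X, 2 * #S ≤ Fintype.card X → 3 * #S ≤ 2 * #(univ.biUnion fun i => S.image (π i))

variable (ι) in
/-- The families of permutations all of which map `S` into `T`. -/
def familiesMapping (S T : Finset X) : Finset (ι → Equiv.Perm X) :=
  Fintype.piFinset fun _ => {σ | ∀ x ∈ S, σ x ∈ T}

lemma card_familiesMapping_le [Nonempty X] (S T : Finset X) :
    (#(familiesMapping ι S T) : ℝ) ≤ (Fintype.card X).factorial ^ Fintype.card ι *
      ((#T / Fintype.card X : ℝ) ^ #S) ^ Fintype.card ι := by
  have card_pos : (0 : ℝ) < Fintype.card X := Nat.cast_pos.2 Fintype.card_pos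
  rw [familiesMapping, Fintype.card_piFinset, prod_const, card_univ, ← mul_pow, Nat.cast_pow,
    div_pow, ← mul_div_assoc]
  gcongr
  rw [le_div_iff₀ (pow_pos card_pos _)]
  exact_mod_cast card_perm_mapsTo_mul_pow_le S T

lemma exists_mem_familiesMapping {π : ι → Equiv.Perm X} (hπ : ¬ IsExpandingFamily π) :
    ∃ S T : Finset X, 0 < #S ∧ 2 * #S ≤ Fintype.card X ∧ #T = #S + #S / 2 ∧
      π ∈ familiesMapping ι S T := by
  simp only [IsExpandingFamily, not_forall, not_le] at hπ
  obtain ⟨S, hS, hlt⟩ := hπ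
  obtain ⟨T, subset_T, card_T⟩ := exists_superset_card_eq
    (s := univ.biUnion fun i => S.image (π i)) (n := #S + #S / 2) (by omega) (by omega)
  refine ⟨S, T, by omega, hS, card_T, ?_⟩
  simp only [familiesMapping, Fintype.mem_piFinset, mem_filter_univ]
  exact fun i x hx => subset_T (mem_biUnion.2 ⟨i, mem_univ i, mem_image_of_mem _ hx⟩)

lemma sum_card_familiesMapping_le {s : ℕ} (hs : 0 < s) (hsX : 2 * s ≤ Fintype.card X) :
    ∑ S ∈ powersetCard s (univ : Finset X), ∑ T ∈ powersetCard (s + s / 2) (univ : Finset X),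
      (#(familiesMapping (Fin 30) S T) : ℝ) ≤
        (Fintype.card X).factorial ^ 30 * (1 / 4) ^ s := by
  have : Nonempty X := Fintype.card_pos_iff.1 (by omega)
  calc _ ≤ ∑ S ∈ powersetCard s (univ : Finset X), ∑ T ∈ powersetCard (s + s / 2) univ,
        ((Fintype.card X).factorial ^ 30 *
          (((s + s / 2 : ℕ) / Fintype.card X : ℝ) ^ s) ^ 30) := by
        refine sum_le_sum fun S hS => sum_le_sum fun T hT => ?_
        simpa only [(mem_powersetCard.1 hS).2, (mem_powersetCard.1 hT).2, Fintype.card_fin]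
          using card_familiesMapping_le (ι := Fin 30) S T
    _ = (Fintype.card X).factorial ^ 30 * ((Fintype.card X).choose s *
          (Fintype.card X).choose (s + s / 2) *
            (((s + s / 2 : ℕ) / Fintype.card X : ℝ) ^ s) ^ 30) := by
        simp only [sum_const, card_powersetCard, card_univ, nsmul_eq_mul]
        ring
    _ ≤ _ := by
        gcongr
        exact choose_mul_choose_mul_pow_le hs hsX

variable (X) in
theorem exists_isExpandingFamily : ∃ π : Fin 30 → Equiv.Perm X, IsExpandingFamily π := by
  by_contra! not_expanding
  let I := Ico 1 (Fintype.card X / 2 + 1)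
  have cover : (univ : Finset (Fin 30 → Equiv.Perm X)) ⊆ I.biUnion fun s =>
      (powersetCard s univ).biUnion fun S => (powersetCard (s + s / 2) univ).biUnion fun T =>
        familiesMapping (Fin 30) S T := by
    intro π _
    obtain ⟨S, T, hS, hSX, hT, hπ⟩ := exists_mem_familiesMapping (not_expanding π)
    simp only [mem_biUnion, mem_powersetCard_univ]
    exact ⟨#S, mem_Ico.2 ⟨hS, by omega⟩, S, rfl, T, hT, hπ⟩
  have card_le : ((Fintype.card X).factorial : ℝ) ^ 30 ≤ ∑ s ∈ I, ∑ S ∈ powersetCard s univ,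
      ∑ T ∈ powersetCard (s + s / 2) univ, (#(familiesMapping (Fin 30) (X := X) S T) : ℝ) := by
    have card_families : #(univ : Finset (Fin 30 → Equiv.Perm X)) =
        (Fintype.card X).factorial ^ 30 := by
      rw [card_univ, Fintype.card_fun, Fintype.card_perm, Fintype.card_fin]
    exact_mod_cast card_families ▸ (card_le_card cover).trans (card_biUnion_le.trans
      (sum_le_sum fun s _ => card_biUnion_le.trans (sum_le_sum fun S _ => card_biUnion_le)))
  have sum_le : ((Fintype.card X).factorial : ℝ) ^ 30 ≤
      (Fintype.card X).factorial ^ 30 * ∑ s ∈ I, (1 / 4 : ℝ) ^ s := by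
    rw [mul_sum]
    refine card_le.trans (sum_le_sum fun s hs => ?_)
    rw [mem_Ico] at hs
    exact sum_card_familiesMapping_le (by omega) (by omega)
  have geom_le : ∑ s ∈ I, (1 / 4 : ℝ) ^ s ≤ 1 / 3 :=
    (geom_sum_Ico_le_of_lt_one (by norm_num) (by norm_num)).trans (by norm_num)
  have factorial_pow_pos : (0 : ℝ) < (Fintype.card X).factorial ^ 30 := by positivity
  nlinarith

end ExpandingPermutations

section SegmentClusters

open Finset

variable {α X ι : Type*}

/-- One step of percolation by segments: `a` and `b` lie in `Y` and some segment joining them is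
contained in `s`. The segment `F x i` joins `x` to `π i x`. -/
def SegStep (π : ι → Equiv.Perm X) (F : X → ι → Finset α) (Y : Finset X) (s : Finset α)
    (a b : X) : Prop :=
  a ∈ Y ∧ b ∈ Y ∧ ∃ i, (π i a = b ∧ F a i ⊆ s) ∨ (π i b = a ∧ F b i ⊆ s)

variable {π : ι → Equiv.Perm X} {F : X → ι → Finset α}

instance (Y : Finset X) (s : Finset α) : Std.Symm (SegStep π F Y s) :=
  ⟨fun _ _ ⟨ha, hb, i, h⟩ => ⟨hb, ha, i, h.symm⟩⟩

variable [Fintype X]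

/-- The cluster of `x` under percolation by segments inside `Y`. -/
def segCluster (π : ι → Equiv.Perm X) (F : X → ι → Finset α) (Y : Finset X) (x : X)
    (s : Finset α) : Finset X :=
  {y | Relation.ReflTransGen (SegStep π F Y s) x y}

lemma mem_segCluster {Y : Finset X} {x y : X} {s : Finset α} :
    y ∈ segCluster π F Y x s ↔ Relation.ReflTransGen (SegStep π F Y s) x y :=
  mem_filter_univ y

lemma self_mem_segCluster (Y : Finset X) (x : X) (s : Finset α) : x ∈ segCluster π F Y x s :=
  mem_segCluster.2 .refl

lemma segCluster_eq_of_mem {Y : Finset X} {x y : X} {s : Finset α}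
    (h : y ∈ segCluster π F Y x s) : segCluster π F Y y s = segCluster π F Y x s := by
  rw [mem_segCluster] at h
  ext z
  simp only [mem_segCluster]
  exact ⟨h.trans, (symm h).trans⟩

lemma segCluster_of_notMem {Y : Finset X} {x : X} (hx : x ∉ Y) (s : Finset α) :
    segCluster π F Y x s = {x} := by
  refine eq_singleton_iff_unique_mem.2 ⟨self_mem_segCluster Y x s, fun z hz => ?_⟩
  rcases Relation.ReflTransGen.cases_head (mem_segCluster.1 hz) with h | ⟨w, h, -⟩
  · exact h.symm
  · exact absurd h.1 hx

lemma eq_or_exists_mem_segCluster_erase {Y : Finset X} {x y : X} {s : Finset α}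
    (h : y ∈ segCluster π F Y x s) :
    y = x ∨ ∃ w, SegStep π F Y s x w ∧ y ∈ segCluster π F (Y.erase x) w s := by
  simp only [mem_segCluster] at h ⊢
  induction h with
  | refl => exact Or.inl rfl
  | @tail b c _ step ih =>
    rcases eq_or_ne c x with hcx | hcx
    · exact Or.inl hcx
    rcases eq_or_ne b x with rfl | hbx
    · exact Or.inr ⟨c, step, .refl⟩
    obtain ⟨w, hw, hwb⟩ := ih.resolve_left hbx
    exact Or.inr ⟨w, hw, hwb.tail
      ⟨mem_erase.2 ⟨hbx, step.1⟩, mem_erase.2 ⟨hcx, step.2.1⟩, step.2.2⟩⟩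

variable [DecidableEq α]

lemma ignores_segCluster {Y : Finset X} {e : α}
    (h : ∀ a i, a ∈ Y → π i a ∈ Y → e ∉ F a i) (w : X) :
    Ignores (segCluster π F Y w) e := by
  intro s
  have step_eq : SegStep π F Y (insert e s) = SegStep π F Y s := by
    funext a b
    refine propext <| and_congr_right fun ha => and_congr_right fun hb => exists_congr fun i =>
      or_congr (and_congr_right fun hab => ?_) (and_congr_right fun hba => ?_)
    · rw [subset_insert_iff_of_notMem (h a i ha (hab ▸ hb))]
    · rw [subset_insert_iff_of_notMem (h b i hb (hba ▸ ha))]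
  simp only [segCluster, step_eq]

variable [Fintype ι]

lemma card_segCluster_le (Y : Finset X) (x : X) (s : Finset α) :
    (#(segCluster π F Y x s) : ℝ) ≤
      1 + (∑ i, (if F x i ⊆ s then 1 else 0) * (#(segCluster π F (Y.erase x) (π i x) s) : ℝ) +
        ∑ i, (if F ((π i).symm x) i ⊆ s then 1 else 0) *
          (#(segCluster π F (Y.erase x) ((π i).symm x) s) : ℝ)) := by
  let forward i := if F x i ⊆ s then segCluster π F (Y.erase x) (π i x) s else ∅
  let backward i :=
    if F ((π i).symm x) i ⊆ s then segCluster π F (Y.erase x) ((π i).symm x) s else ∅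
  have cover : segCluster π F Y x s ⊆ {x} ∪ (univ.biUnion forward ∪ univ.biUnion backward) := by
    intro y hy
    rcases eq_or_exists_mem_segCluster_erase hy with rfl | ⟨w, ⟨-, -, i, ⟨rfl, h⟩ | ⟨rfl, h⟩⟩, hw⟩
    · exact mem_union_left _ (mem_singleton_self y)
    · refine mem_union_right _ (mem_union_left _ (mem_biUnion.2 ⟨i, mem_univ i, ?_⟩))
      simpa only [forward, h, if_true] using hw
    · refine mem_union_right _ (mem_union_right _ (mem_biUnion.2 ⟨i, mem_univ i, ?_⟩))
      simpa only [backward, Equiv.symm_apply_apply, h, if_true] using hw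
  have card_le : #(segCluster π F Y x s) ≤ 1 + (∑ i, #(forward i) + ∑ i, #(backward i)) :=
    (card_le_card cover).trans <| (card_union_le _ _).trans <| Nat.add_le_add_left
      ((card_union_le _ _).trans (Nat.add_le_add card_biUnion_le card_biUnion_le)) _
  refine (Nat.cast_le.2 card_le).trans_eq ?_
  simp only [forward, backward, apply_ite card, card_empty, Nat.cast_add, Nat.cast_one,
    Nat.cast_sum, Nat.cast_ite, Nat.cast_zero, ite_mul, one_mul, zero_mul]

section Percolation

variable {p : ℝ} {E : Finset α} {l : ℕ}

omit [DecidableEq α] in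
/-- Peeling off `x`, a cluster consists of `x` and the clusters of the ends of the `2 |ι|` segments
at `x`, and these are independent of the segments themselves. -/
lemma bernExp_card_segCluster_le (hp0 : 0 ≤ p) (hp1 : p ≤ 1)
    (hFE : ∀ x i, F x i ⊆ E) (hFl : ∀ x i, #(F x i) = l)
    (hdisj : Pairwise fun z w : X × ι => Disjoint (F z.1 z.2) (F w.1 w.2))
    (hpl : p ^ l * (4 * Fintype.card ι) ≤ 1) (Y : Finset X) (x : X) :
    bernExp p E (fun s => (#(segCluster π F Y x s) : ℝ)) ≤ 2 := by
  induction Y using Finset.strongInduction generalizing x with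
  | H Y ih =>
    by_cases hx : x ∉ Y
    · simp only [segCluster_of_notMem hx, card_singleton, Nat.cast_one, bernExp_const,
        one_le_two]
    rw [not_not] at hx
    have branch_le : ∀ z i w, (z = x ∨ π i z = x) →
        bernExp p E (fun s => (if F z i ⊆ s then 1 else 0) *
          (#(segCluster π F (Y.erase x) w s) : ℝ)) ≤ p ^ l * 2 := by
      intro z i w hz
      rw [bernExp_subset_mul p (hFE z i), hFl]
      · exact mul_le_mul_of_nonneg_left (ih _ (erase_ssubset hx) w) (pow_nonneg hp0 _)
      refine fun e he => (ignores_segCluster (fun a j ha hb hmem => ?_) w).comp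
        fun C => (#C : ℝ)
      have same : (z, i) = (a, j) := hdisj.eq (not_disjoint_iff.2 ⟨e, he, hmem⟩)
      simp only [Prod.mk.injEq] at same
      obtain ⟨rfl, rfl⟩ := same
      exact hz.elim (ne_of_mem_erase ha) (ne_of_mem_erase hb)
    have half : ∀ z : ι → X, ∀ w : ι → X, (∀ i, z i = x ∨ π i (z i) = x) →
        ∑ i, bernExp p E (fun s => (if F (z i) i ⊆ s then 1 else 0) *
          (#(segCluster π F (Y.erase x) (w i) s) : ℝ)) ≤ 1 / 2 := by
      intro z w hz
      refine (sum_le_card_nsmul univ _ _ fun i _ => branch_le (z i) i (w i) (hz i)).trans ?_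
      rw [card_univ, nsmul_eq_mul]
      linarith
    refine (bernExp_mono hp0 hp1 fun s _ => card_segCluster_le Y x s).trans ?_
    rw [bernExp_add, bernExp_add, bernExp_const, bernExp_sum, bernExp_sum]
    linarith [half (fun _ => x) (fun i => π i x) fun _ => Or.inl rfl,
      half (fun i => (π i).symm x) (fun i => (π i).symm x)
        fun i => Or.inr ((π i).apply_symm_apply x)]

omit [DecidableEq α] in
/-- A cluster of size more than `M` contributes more than `M ^ 2` to the sum over all points of the
size of their cluster. -/
lemma bernProb_exists_lt_card_segCluster_le (hp0 : 0 ≤ p) (hp1 : p ≤ 1)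
    (hFE : ∀ x i, F x i ⊆ E) (hFl : ∀ x i, #(F x i) = l)
    (hdisj : Pairwise fun z w : X × ι => Disjoint (F z.1 z.2) (F w.1 w.2))
    (hpl : p ^ l * (4 * Fintype.card ι) ≤ 1) {M : ℕ} (hM : 0 < M) :
    bernProb p E (fun s => ∃ x, M < #(segCluster π F univ x s)) ≤
      2 * Fintype.card X / (M : ℝ) ^ 2 := by
  calc bernProb p E (fun s => ∃ x, M < #(segCluster π F univ x s))
      ≤ bernProb p E (fun s => (M : ℝ) ^ 2 < ∑ x, (#(segCluster π F univ x s) : ℝ)) := by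
        refine bernProb_mono hp0 hp1 fun s _ ⟨x, hx⟩ => ?_
        calc (M : ℝ) ^ 2 < (#(segCluster π F univ x s) : ℝ) ^ 2 := by gcongr
          _ = ∑ y ∈ segCluster π F univ x s, (#(segCluster π F univ y s) : ℝ) := by
            rw [sum_congr rfl fun y hy => by rw [segCluster_eq_of_mem hy], sum_const,
              nsmul_eq_mul, sq]
          _ ≤ _ := sum_le_univ_sum_of_nonneg fun _ => Nat.cast_nonneg _
    _ ≤ (∑ x, bernExp p E fun s => (#(segCluster π F univ x s) : ℝ)) / (M : ℝ) ^ 2 := by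
        rw [← bernExp_sum]
        exact bernProb_lt_le_div hp0 hp1 (fun s => by positivity) (by positivity)
    _ ≤ 2 * Fintype.card X / (M : ℝ) ^ 2 := by
        gcongr
        refine (sum_le_card_nsmul univ _ _ fun x _ =>
          bernExp_card_segCluster_le hp0 hp1 hFE hFl hdisj hpl univ x).trans_eq ?_
        rw [card_univ, nsmul_eq_mul, mul_comm]

end Percolation

end SegmentClusters

section BinaryTree

variable {α : Type*}

/-- In the binary heap, where `x` has the children `2 * x` and `2 * x + 1`, there is a path of `k`
steps down from `x` all of whose nodes, including `x`, are good. -/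
def GoodRay (Good : ℕ → Finset α → Prop) : ℕ → ℕ → Finset α → Prop
  | 0, x, s => Good x s
  | k + 1, x, s => Good x s ∧ (GoodRay Good k (2 * x) s ∨ GoodRay Good k (2 * x + 1) s)

lemma div_two_pow_ne_two_mul_add_one {n x i : ℕ} (hx : 0 < x) (h : n / 2 ^ i = 2 * x) (j : ℕ) :
    n / 2 ^ j ≠ 2 * x + 1 := by
  intro h'
  rcases lt_trichotomy i j with hij | rfl | hij
  · obtain ⟨k, rfl⟩ := Nat.exists_eq_add_of_lt hij
    rw [add_assoc, pow_add, ← Nat.div_div_eq_div_mul, h, pow_succ', ← Nat.div_div_eq_div_mul] at h'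
    have := Nat.div_le_self (2 * x / 2) (2 ^ k)
    omega
  · omega
  · obtain ⟨k, rfl⟩ := Nat.exists_eq_add_of_lt hij
    rw [add_assoc, pow_add, ← Nat.div_div_eq_div_mul, h', pow_succ', ← Nat.div_div_eq_div_mul] at h
    have := Nat.div_le_self ((2 * x + 1) / 2) (2 ^ k)
    omega

variable [DecidableEq α] {Good : ℕ → Finset α → Prop} {owner : α → ℕ}

lemma ignores_goodRay (hown : ∀ e y, owner e ≠ y → Ignores (Good y) e) (k : ℕ) {x : ℕ} {e : α}
    (he : ∀ i, owner e / 2 ^ i ≠ x) : Ignores (GoodRay Good k x) e := by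
  have good_x : Ignores (Good x) e := hown e x (by simpa using he 0)
  induction k generalizing x with
  | zero => exact good_x
  | succ k ih =>
    have child : ∀ y, y / 2 = x → Ignores (GoodRay Good k y) e := fun y hy => by
      have he' : ∀ i, owner e / 2 ^ i ≠ y := fun i hi => he (i + 1) (by
        rw [pow_succ, ← Nat.div_div_eq_div_mul, hi, hy])
      exact ih he' (hown e y (by simpa using he' 0))
    intro s
    simp only [GoodRay, good_x s, child (2 * x) (by omega) s, child (2 * x + 1) (by omega) s]

lemma bernProb_not_goodRay_le {p η : ℝ} (hp0 : 0 ≤ p) (hp1 : p ≤ 1) (hη0 : 0 ≤ η) (hη : η ≤ 1 / 4)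
    {E : Finset α} (hown : ∀ e y, owner e ≠ y → Ignores (Good y) e) {k x : ℕ} (hx : 0 < x)
    (hgood : ∀ y, 0 < y → y < (x + 1) * 2 ^ k → bernProb p E (fun s => ¬ Good y s) ≤ η) :
    bernProb p E (fun s => ¬ GoodRay Good k x s) ≤ 2 * η := by
  have bad_root_le : bernProb p E (fun s => ¬ Good x s) ≤ η :=
    hgood x hx (x.lt_succ_self.trans_le (Nat.le_mul_of_pos_right _ (by positivity)))
  induction k generalizing x with
  | zero => exact bad_root_le.trans (by linarith)
  | succ k ih =>
    have bad_child_le : ∀ y, y / 2 = x →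
        bernProb p E (fun s => ¬ GoodRay Good k y s) ≤ 2 * η := by
      intro y hy
      have subtree : (y + 1) * 2 ^ k ≤ (x + 1) * 2 ^ (k + 1) := by
        rw [pow_succ', ← mul_assoc]
        exact Nat.mul_le_mul_right _ (by omega)
      refine ih (by omega) (fun z hz hlt => hgood z hz (hlt.trans_le subtree))
        (hgood y (by omega) ?_)
      exact (y.lt_succ_self.trans_le (Nat.le_mul_of_pos_right _ (by positivity))).trans_le subtree
    have children_ignore : ∀ e, Ignores (fun s => ¬ GoodRay Good k (2 * x) s) e ∨
        Ignores (fun s => ¬ GoodRay Good k (2 * x + 1) s) e := by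
      intro e
      by_cases he : ∀ i, owner e / 2 ^ i ≠ 2 * x
      · exact Or.inl ((ignores_goodRay hown k he).comp Not)
      · push Not at he
        obtain ⟨i, hi⟩ := he
        exact Or.inr ((ignores_goodRay hown k (div_two_pow_ne_two_mul_add_one hx hi)).comp Not)
    calc bernProb p E (fun s => ¬ GoodRay Good (k + 1) x s)
        ≤ bernProb p E (fun s => ¬ Good x s ∨
            (¬ GoodRay Good k (2 * x) s ∧ ¬ GoodRay Good k (2 * x + 1) s)) :=
          bernProb_mono hp0 hp1 fun s _ h => by simp only [GoodRay] at h; tauto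
      _ ≤ η + 2 * η * (2 * η) := by
          refine (bernProb_or_le hp0 hp1 E _ _).trans (add_le_add bad_root_le ?_)
          rw [bernProb_and_of_ignores p E children_ignore]
          exact mul_le_mul (bad_child_le _ (by omega)) (bad_child_le _ (by omega))
            (bernProb_nonneg hp0 hp1 E _) (by linarith)
      _ ≤ 2 * η := by nlinarith

end BinaryTree

section Construction

/-- Positions in the stretched binary tree. Node `x ≥ 1` of the binary heap with levels
`2 ^ (h - 1) ≤ x < 2 ^ h` of leaves is stretched into a column of `m + 1` clusters, and the column
of index `0` is a stem above the root `1`. -/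
abbrev Cluster (h m : ℕ) : Type := Fin (2 ^ h) × Fin (m + 1)

/-- The vertices of the construction: `K` copies of each cluster of the tree, the base `X`, and
`q + 2` interior vertices on each segment replacing an edge of the base. The segments are indexed
by their starting point and the permutation that gives their endpoint. -/
inductive Vertex (h m K q : ℕ) (X ι : Type) : Type
  | tree (c : Cluster h m) (i : Fin K) : Vertex h m K q X ι
  | base (z : X) : Vertex h m K q X ι
  | seg (z : X) (k : ι) (j : Fin (q + 2)) : Vertex h m K q X ι
  deriving DecidableEq, Fintype

variable {h m K q : ℕ} {X ι : Type}

/-- The cluster just above `c`, towards the top of the stem. -/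
def clusterAbove (c : Cluster h m) : Cluster h m :=
  if c.2.val = 0 then (⟨c.1.val / 2, (Nat.div_le_self _ _).trans_lt c.1.2⟩, Fin.last m)
  else (c.1, ⟨c.2.val - 1, (Nat.sub_le _ _).trans_lt c.2.2⟩)

/-- `c` is not the top of the stem. -/
def NotTop (c : Cluster h m) : Prop := 0 < c.1.val ∨ 0 < c.2.val

/-- `c` is the last cluster of the column of a leaf. -/
def IsBottom (c : Cluster h m) : Prop := 2 ^ h ≤ 2 * c.1.val ∧ c.2 = Fin.last m

/-- The edges of the construction, oriented away from the top of the stem and along the segments.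
Consecutive clusters are completely joined, and the vertices at the bottom of the tree are glued to
distinct points of the base by `a`. -/
inductive Link (π : ι → Equiv.Perm X) (a : Fin (2 ^ h) × Fin K ↪ X) :
    Vertex h m K q X ι → Vertex h m K q X ι → Prop
  | tree (c) (hc : NotTop c) (i j) : Link π a (.tree (clusterAbove c) i) (.tree c j)
  | attach (c i) (hc : IsBottom c) : Link π a (.tree c i) (.base (a (c.1, i)))
  | start (z k) : Link π a (.base z) (.seg z k 0)
  | mid (z k j j') (hj : j.val + 1 = j'.val) : Link π a (.seg z k j) (.seg z k j')
  | finish (z k) : Link π a (.seg z k (Fin.last (q + 1))) (.base (π k z))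

/-- The distance of a cluster from the top of the stem. -/
def clusterDepth (c : Cluster h m) : ℕ := (m + 1) * Nat.size c.1.val + c.2.val

lemma size_eq_size_div_two_add_one {n : ℕ} (hn : 0 < n) : Nat.size n = Nat.size (n / 2) + 1 := by
  have := Nat.size_bit (b := n.bodd) (n := n.div2) (by rw [Nat.bit_bodd_div2]; exact hn.ne')
  rwa [Nat.bit_bodd_div2, Nat.div2_val] at this

lemma clusterDepth_clusterAbove {c : Cluster h m} (hc : NotTop c) :
    clusterDepth (clusterAbove c) + 1 = clusterDepth c := by
  obtain ⟨⟨x, hx⟩, ⟨y, hy⟩⟩ := c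
  simp only [NotTop] at hc
  rcases y.eq_zero_or_pos with rfl | hpos
  · simp only [clusterDepth, clusterAbove, if_true, Fin.val_last,
      size_eq_size_div_two_add_one (n := x) (by omega)]
    ring
  · simp only [clusterDepth, clusterAbove, hpos.ne', if_false]
    omega

lemma clusterDepth_of_isBottom {c : Cluster h m} (hc : IsBottom c) :
    clusterDepth c = (m + 1) * h + m := by
  have size_le : Nat.size c.1.val ≤ h := Nat.size_le.2 c.1.2
  have le_size : h ≤ Nat.size c.1.val := by
    rcases h with _ | h
    · exact Nat.zero_le _
    · have pow_le : 2 ^ h * 2 ≤ 2 * c.1.val := (pow_succ 2 h).symm.trans_le hc.1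
      exact Nat.lt_size.2 (by omega)
  rw [clusterDepth, le_antisymm size_le le_size, hc.2, Fin.val_last]

/-- The distance of a vertex from the top of the stem, truncated at the depth of the leaves. -/
def vertexDepth : Vertex h m K q X ι → ℕ
  | .tree c _ => clusterDepth c
  | _ => (m + 1) * h + m

/-- The vertices of the lowest cluster of the stem. -/
abbrev stemVertex (i : Fin K) : Vertex h m K q X ι :=
  .tree (⟨0, Nat.two_pow_pos h⟩, Fin.last m) i

lemma vertexDepth_stemVertex (i : Fin K) : vertexDepth (stemVertex i : Vertex h m K q X ι) = m := by
  simp [vertexDepth, clusterDepth]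

variable {π : ι → Equiv.Perm X} {a : Fin (2 ^ h) × Fin K ↪ X}

lemma Link.vertexDepth_le {u w : Vertex h m K q X ι} (huw : Link π a u w) :
    vertexDepth u ≤ vertexDepth w ∧ vertexDepth w ≤ vertexDepth u + 1 := by
  cases huw with
  | tree c hc i j =>
    have := clusterDepth_clusterAbove hc
    simp only [vertexDepth]
    omega
  | attach c i hc => simp [vertexDepth, clusterDepth_of_isBottom hc]
  | _ => simp [vertexDepth]

lemma Link.ne {u w : Vertex h m K q X ι} (huw : Link π a u w) : u ≠ w := by
  cases huw with
  | tree c hc i j =>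
    intro hcc
    injection hcc with hcc
    have := clusterDepth_clusterAbove hc
    rw [hcc] at this
    omega
  | mid z k j j' hj =>
    rintro ⟨⟩
    omega
  | _ => rintro ⟨⟩

/-- The graph of the construction: a thickened and stretched binary tree whose leaves are glued to
the subdivided expander with edges `x — π k x`. -/
def linkGraph (m q : ℕ) (π : ι → Equiv.Perm X) (a : Fin (2 ^ h) × Fin K ↪ X) :
    SimpleGraph (Vertex h m K q X ι) where
  Adj u w := Link π a u w ∨ Link π a w u
  symm := ⟨fun _ _ huw => huw.symm⟩
  loopless := ⟨fun _ huw => (huw.elim id id).ne rfl⟩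

variable (π) in
/-- The points of the segment from `z` to `π k z`, both ends included. -/
def segPoint (z : X) (k : ι) (j : ℕ) : Vertex h m K q X ι :=
  if j = 0 then .base z
  else if hj : j - 1 < q + 2 then .seg z k ⟨j - 1, hj⟩
  else .base (π k z)

lemma segPoint_succ (z : X) (k : ι) (j : Fin (q + 2)) :
    segPoint π z k (j.val + 1) = (.seg z k j : Vertex h m K q X ι) :=
  dif_pos j.2

lemma segPoint_last (z : X) (k : ι) :
    segPoint π z k (q + 3) = (.base (π k z) : Vertex h m K q X ι) :=
  dif_neg (lt_irrefl (q + 2))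

lemma link_segPoint (z : X) (k : ι) (j : Fin (q + 3)) :
    Link π a (segPoint π z k j.val : Vertex h m K q X ι) (segPoint π z k (j.val + 1)) := by
  obtain ⟨_ | j, hj⟩ := j
  · exact segPoint_succ (π := π) (h := h) (m := m) (K := K) z k 0 ▸ Link.start z k
  · have hj' : j < q + 2 := by omega
    change Link π a (segPoint π z k ((⟨j, hj'⟩ : Fin (q + 2)).val + 1)) _
    rw [segPoint_succ]
    rcases Nat.lt_or_ge (j + 1) (q + 2) with hlt | hge
    · change Link π a _ (segPoint π z k ((⟨j + 1, hlt⟩ : Fin (q + 2)).val + 1))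
      rw [segPoint_succ]
      exact .mid z k _ _ rfl
    · obtain rfl : j = q + 1 := by omega
      exact segPoint_last (π := π) (h := h) (m := m) (K := K) z k ▸ Link.finish z k

variable (π) in
/-- The `j`-th edge of the segment from `z` to `π k z`. -/
def segEdge (z : X) (k : ι) (j : Fin (q + 3)) : Sym2 (Vertex h m K q X ι) :=
  s(segPoint π z k j.val, segPoint π z k (j.val + 1))

/-- Each edge of a segment has an interior end, as there are at least two interior vertices. -/
lemma segEdge_inj {z z' : X} {k k' : ι} {j j' : Fin (q + 3)}
    (he : (segEdge π z k j : Sym2 (Vertex h m K q X ι)) = segEdge π z' k' j') :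
    z = z' ∧ k = k' ∧ j = j' := by
  obtain ⟨j, hj⟩ := j
  obtain ⟨j', hj'⟩ := j'
  simp only [segEdge, segPoint, Sym2.eq_iff] at he
  simp only [Fin.mk.injEq]
  rcases he with ⟨h1, h2⟩ | ⟨h1, h2⟩ <;> split_ifs at h1 h2 <;>
    simp only [Vertex.seg.injEq, Vertex.base.injEq, Fin.mk.injEq] at h1 h2 <;>
    (try omega) <;> exact ⟨by simp_all, by simp_all, by omega⟩

end Construction

section Degree

open Finset

variable {h m K q : ℕ} {X ι : Type} {π : ι → Equiv.Perm X} {a : Fin (2 ^ h) × Fin K ↪ X}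

lemma clusterAbove_eq_iff {c c' : Cluster h m} (hc : NotTop c) :
    clusterAbove c = c' ↔ (c.1 = c'.1 ∧ c.2.val = c'.2.val + 1) ∨
      (c.1 ≠ c'.1 ∧ c.1.val / 2 = c'.1.val ∧ c.2.val = 0 ∧ c'.2 = Fin.last m) := by
  obtain ⟨⟨x, hx⟩, ⟨y, hy⟩⟩ := c
  simp only [NotTop] at hc
  simp only [clusterAbove, Prod.ext_iff, Fin.ext_iff, Fin.val_last, ne_eq]
  split_ifs <;> simp only [Fin.val_last] <;> omega

lemma card_filter_clusterAbove_eq_le (c : Cluster h m) :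
    #{c' : Cluster h m | NotTop c' ∧ clusterAbove c' = c} ≤ 3 := by
  let f (c' : Cluster h m) : ℕ := if c'.2.val = 0 then c'.1.val % 2 else 2
  have f_lt (c') : f c' < 3 := by simp only [f]; split_ifs <;> omega
  refine (card_le_card_of_injOn (t := range 3) f (fun c' _ => mem_range.2 (f_lt c')) ?_).trans_eq
    (card_range 3)
  intro c₁ h₁ c₂ h₂ hf
  rw [mem_coe, mem_filter_univ] at h₁ h₂
  have e₁ := (clusterAbove_eq_iff h₁.1).1 h₁.2
  have e₂ := (clusterAbove_eq_iff h₂.1).1 h₂.2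
  simp only [f, Prod.ext_iff, Fin.ext_iff, ne_eq] at *
  split_ifs at hf <;> omega

lemma ncard_neighborSet_tree_le (c : Cluster h m) (i : Fin K) :
    ((linkGraph m q π a).neighborSet (.tree c i)).ncard ≤ 4 * K + 1 := by
  let near : Finset (Cluster h m) :=
    insert (clusterAbove c) ({c' | NotTop c' ∧ clusterAbove c' = c} : Finset _)
  let T : Finset (Vertex h m K q X ι) :=
    insert (.base (a (c.1, i))) ((near ×ˢ univ).image fun z : Cluster h m × Fin K => .tree z.1 z.2)
  have subset_T : (linkGraph m q π a).neighborSet (.tree c i) ⊆ T := by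
    rintro w (hw | hw) <;> cases hw <;> simp_all [T, near]
  have card_near : #near ≤ 4 :=
    (card_insert_le _ _).trans (Nat.succ_le_succ (card_filter_clusterAbove_eq_le c))
  calc _ ≤ #T := (Set.ncard_le_ncard subset_T T.finite_toSet).trans_eq (Set.ncard_coe_finset T)
    _ ≤ #(near ×ˢ (univ : Finset (Fin K))) + 1 :=
      (card_insert_le _ _).trans (Nat.succ_le_succ card_image_le)
    _ ≤ 4 * K + 1 := by
      rw [card_product, card_univ, Fintype.card_fin]
      gcongr

lemma ncard_neighborSet_base_le [Fintype ι] (z : X) :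
    ((linkGraph m q π a).neighborSet (.base z)).ncard ≤ 2 * Fintype.card ι + 1 := by
  let outer : Set (Vertex h m K q X ι) :=
    {w | ∃ c i, w = .tree c i ∧ c.2 = Fin.last m ∧ a (c.1, i) = z}
  let starts : Finset (Vertex h m K q X ι) := univ.image fun k => .seg z k 0
  let ends : Finset (Vertex h m K q X ι) :=
    univ.image fun k => .seg ((π k).symm z) k (Fin.last (q + 1))
  have outer_subsingleton : outer.Subsingleton := by
    rintro _ ⟨c, i, rfl, hc, hz⟩ _ ⟨c', i', rfl, hc', hz'⟩
    have := a.injective (hz.trans hz'.symm)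
    simp only [Prod.mk.injEq] at this
    rw [Prod.ext this.1 (hc.trans hc'.symm), this.2]
  have subset_union : (linkGraph m q π a).neighborSet (.base z) ⊆ outer ∪ (starts ∪ ends) := by
    rintro w (hw | hw) <;> cases hw
    · simp [starts]
    · rename_i c i hc
      exact .inl ⟨c, i, rfl, hc.2, rfl⟩
    · simp [ends]
  have outer_ncard_le : outer.ncard ≤ 1 :=
    (Set.ncard_le_one outer_subsingleton.finite).2 outer_subsingleton
  have finite_union := outer_subsingleton.finite.union (starts ∪ ends : Set _).toFinite
  calc _ ≤ (outer ∪ (starts ∪ ends)).ncard := Set.ncard_le_ncard subset_union finite_union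
    _ ≤ 1 + (Fintype.card ι + Fintype.card ι) := by
      refine (Set.ncard_union_le _ _).trans (add_le_add outer_ncard_le
        ((Set.ncard_union_le _ _).trans (add_le_add ?_ ?_))) <;>
        exact (Set.ncard_coe_finset _).trans_le card_image_le
    _ = _ := by ring

lemma ncard_neighborSet_seg_le (z : X) (k : ι) (j : Fin (q + 2)) :
    ((linkGraph m q π a).neighborSet (.seg z k j)).ncard ≤ 2 := by
  have subset_pair : (linkGraph m q π a).neighborSet (.seg z k j) ⊆
      {segPoint π z k j.val, segPoint π z k (j.val + 2)} := by
    rintro w (hw | hw) <;> cases hw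
    · rename_i j' hj
      exact .inr ((segPoint_succ z k j').symm.trans (by rw [← hj]))
    · exact .inr (segPoint_last z k).symm
    · exact .inl rfl
    · rename_i j' hj
      exact .inl ((segPoint_succ z k j').symm.trans (by rw [hj]))
  exact (Set.ncard_le_ncard subset_pair (Set.toFinite _)).trans
    (by simpa using Set.ncard_insert_le (segPoint π z k j.val) {segPoint π z k (j.val + 2)})

lemma ncard_neighborSet_linkGraph_le [Fintype ι] (v : Vertex h m K q X ι) :
    ((linkGraph m q π a).neighborSet v).ncard ≤ 4 * K + 2 * Fintype.card ι + 2 := by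
  cases v with
  | tree c i => exact (ncard_neighborSet_tree_le c i).trans (by omega)
  | base z => exact (ncard_neighborSet_base_le z).trans (by omega)
  | seg z k j => exact (ncard_neighborSet_seg_le z k j).trans (by omega)

end Degree

section Expansion

open Finset

lemma cutCard_compl (G : SimpleGraph V) (A : Finset V) : cutCard G Aᶜ = cutCard G A := by
  unfold cutCard
  congr 1
  ext e
  simp only [mem_filter, mem_compl, not_not, and_congr_right_iff]
  intro _
  constructor <;> rintro ⟨x, hx, y, hy, rfl⟩ <;> exact ⟨y, hy, x, hx, Sym2.eq_swap⟩

lemma mem_cutEdges {G : SimpleGraph V} {A : Finset V} {u w : V} (hG : G.Adj u w)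
    (hA : ¬ (u ∈ A ↔ w ∈ A)) :
    s(u, w) ∈ (edgeFinset' G).filter fun e => ∃ x ∈ A, ∃ y, y ∉ A ∧ e = s(x, y) := by
  simp only [edgeFinset', mem_filter, mem_univ, true_and, SimpleGraph.mem_edgeSet]
  refine ⟨hG, ?_⟩
  by_cases hu : u ∈ A
  · exact ⟨u, hu, w, by tauto, rfl⟩
  · exact ⟨w, by tauto, u, hu, Sym2.eq_swap⟩

lemma card_le_cutCard {κ : Type*} {G : SimpleGraph V} {A : Finset V} {T : Finset κ}
    (r : κ → Sym2 V → Prop) (hT : ∀ k ∈ T, ∃ u w, G.Adj u w ∧ ¬ (u ∈ A ↔ w ∈ A) ∧ r k s(u, w))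
    (hr : ∀ e k k', r k e → r k' e → k = k') : #T ≤ cutCard G A := by
  refine card_le_card_of_forall_subsingleton r (fun k hk => ?_)
    fun e _ k hk k' hk' => hr e k k' hk.2 hk'.2
  obtain ⟨u, w, hG, hA, hk⟩ := hT k hk
  exact ⟨s(u, w), mem_cutEdges hG hA, hk⟩

variable {h m K q : ℕ} {X ι : Type} [DecidableEq X] [DecidableEq ι] {π : ι → Equiv.Perm X}
  {a : Fin (2 ^ h) × Fin K ↪ X} {A : Finset (Vertex h m K q X ι)}

/-- The columns of tree vertices whose bottom vertex lies in `A`. -/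
def endSet (A : Finset (Vertex h m K q X ι)) : Finset (Fin (2 ^ h) × Fin K) :=
  {x | .tree (x.1, Fin.last m) x.2 ∈ A}

lemma mem_endSet {x : Fin (2 ^ h) × Fin K} : x ∈ endSet A ↔ .tree (x.1, Fin.last m) x.2 ∈ A :=
  mem_filter_univ x

/-- The columns of tree vertices with an edge of the column leaving `A`, where the edge above the
column is included. -/
def cutColumns (A : Finset (Vertex h m K q X ι)) : Finset (Fin (2 ^ h) × Fin K) :=
  {x | ∃ y, NotTop (x.1, y) ∧ ¬ (.tree (clusterAbove (x.1, y)) x.2 ∈ A ↔ .tree (x.1, y) x.2 ∈ A)}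

lemma tree_clusterAbove_mem_iff {x : Fin (2 ^ h)} {i : Fin K} (hx : (x, i) ∉ cutColumns A)
    {y : Fin (m + 1)} (hy : NotTop (x, y)) :
    .tree (clusterAbove (x, y)) i ∈ A ↔ .tree (x, y) i ∈ A := by
  simp only [cutColumns, mem_filter_univ, not_exists, not_and, not_not] at hx
  exact hx y hy

lemma tree_mem_iff {x : Fin (2 ^ h)} {i : Fin K} (hx : (x, i) ∉ cutColumns A) (y : Fin (m + 1)) :
    .tree (x, y) i ∈ A ↔ (x, i) ∈ endSet A := by
  have mem_iff_zero (y : ℕ) (hy : y < m + 1) : .tree (x, ⟨y, hy⟩) i ∈ A ↔ .tree (x, 0) i ∈ A := by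
    induction y with
    | zero => rfl
    | succ y ih =>
      rw [← ih (by omega), ← tree_clusterAbove_mem_iff hx (.inr y.succ_pos)]
      rfl
  rw [mem_endSet]
  exact (mem_iff_zero y y.2).trans (mem_iff_zero m m.lt_succ_self).symm

/-- The two columns below the column of an inner node, with the stem and the column of the root
below the stem. -/
def childColumn (x : Fin (2 ^ h)) (b : Fin 2) : Fin (2 ^ h) := Fin.ofNat (2 ^ h) (2 * x.val + b.val)

lemma val_childColumn (hh : 0 < h) {x : Fin (2 ^ h)} (hx : 2 * x.val < 2 ^ h) (b : Fin 2) :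
    (childColumn x b).val = 2 * x.val + b.val := by
  have even := dvd_pow_self 2 hh.ne'
  exact Nat.mod_eq_of_lt (by omega)

lemma childColumn_mem (hh : 0 < h) {x : Fin (2 ^ h)} {i : Fin K} (hx : 2 * x.val < 2 ^ h)
    (hxA : (x, i) ∈ endSet A) (b : Fin 2) :
    (childColumn x b, i) ∈ endSet A ∪ cutColumns A := by
  have val_eq := val_childColumn hh hx b
  refine mem_union.2 (or_iff_not_imp_right.2 fun not_cut => ?_)
  by_cases eq_self : childColumn x b = x
  · rwa [eq_self]
  have above : clusterAbove (childColumn x b, (0 : Fin (m + 1))) = (x, Fin.last m) :=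
    Prod.ext (Fin.ext (by simp only [clusterAbove, Fin.val_zero, if_true]; omega)) rfl
  have not_top : NotTop (childColumn x b, (0 : Fin (m + 1))) :=
    .inl (Nat.pos_of_ne_zero fun h0 => eq_self (Fin.ext (by simp only at h0; omega)))
  rw [← tree_mem_iff not_cut 0, ← tree_clusterAbove_mem_iff not_cut not_top, above]
  exact mem_endSet.1 hxA

lemma two_mul_card_filter_endSet_inner_le (hh : 0 < h) :
    2 * #{x ∈ endSet A | ¬ 2 ^ h ≤ 2 * x.1.val} ≤ #(endSet A) + #(cutColumns A) := by
  set inner := {x ∈ endSet A | ¬ 2 ^ h ≤ 2 * x.1.val} with inner_def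
  have mem_inner {x} : x ∈ inner ↔ x ∈ endSet A ∧ 2 * x.1.val < 2 ^ h := by
    rw [inner_def, mem_filter, not_le]
  calc 2 * #inner = #(inner ×ˢ (univ : Finset (Fin 2))) := by
        rw [card_product, card_univ, Fintype.card_fin, mul_comm]
    _ ≤ #(endSet A ∪ cutColumns A) := by
      refine card_le_card_of_injOn (fun x => (childColumn x.1.1 x.2, x.1.2)) ?_ ?_
      · rintro ⟨⟨x, i⟩, b⟩ hx
        obtain ⟨hxA, hx⟩ := mem_inner.1 (mem_product.1 hx).1
        exact childColumn_mem hh hx hxA b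
      · rintro ⟨⟨x, i⟩, b⟩ hx ⟨⟨x', i'⟩, b'⟩ hx' heq
        have val_eq : (childColumn x b).val = 2 * x.val + b.val :=
          val_childColumn hh (mem_inner.1 (mem_product.1 hx).1).2 b
        have val_eq' : (childColumn x' b').val = 2 * x'.val + b'.val :=
          val_childColumn hh (mem_inner.1 (mem_product.1 hx').1).2 b'
        simp only [Prod.mk.injEq, Fin.ext_iff] at heq ⊢
        omega
    _ ≤ _ := card_union_le _ _

variable (a) in
/-- The columns of the leaves for which the edge to the base leaves `A`. -/
def cutLeaves (A : Finset (Vertex h m K q X ι)) : Finset (Fin (2 ^ h) × Fin K) :=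
  {x | 2 ^ h ≤ 2 * x.1.val ∧ ¬ (.tree (x.1, Fin.last m) x.2 ∈ A ↔ .base (a x) ∈ A)}

variable [Fintype X]

/-- The points of the base that lie in `A`. -/
def baseSet (A : Finset (Vertex h m K q X ι)) : Finset X := {z | .base z ∈ A}

lemma mem_baseSet {z : X} : z ∈ baseSet A ↔ .base z ∈ A :=
  mem_filter_univ z

lemma card_filter_endSet_leaf_le :
    #{x ∈ endSet A | 2 ^ h ≤ 2 * x.1.val} ≤ #(baseSet A) + #(cutLeaves a A) := by
  have subset_union : {x ∈ endSet A | 2 ^ h ≤ 2 * x.1.val} ⊆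
      (baseSet A).preimage a a.injective.injOn ∪ cutLeaves a A := by
    intro x hx
    simp only [mem_filter, mem_union, mem_preimage, mem_baseSet, mem_endSet, cutLeaves, mem_univ,
      true_and] at hx ⊢
    tauto
  refine (card_le_card subset_union).trans ((card_union_le _ _).trans (Nat.add_le_add_right ?_ _))
  exact card_le_card_of_injOn a (by simp [Set.MapsTo]) a.injective.injOn

lemma card_endSet_le (hh : 0 < h) :
    #(endSet A) ≤ 2 * #(baseSet A) + 2 * #(cutLeaves a A) + #(cutColumns A) := by
  have leaf := card_filter_endSet_leaf_le (A := A) (a := a)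
  have inner := two_mul_card_filter_endSet_inner_le (A := A) hh
  have split := card_filter_add_card_filter_not (s := endSet A) fun x => 2 ^ h ≤ 2 * x.1.val
  omega

variable [Fintype ι]

variable (π) in
/-- The segments with an edge leaving `A`. -/
def cutSegments (A : Finset (Vertex h m K q X ι)) : Finset (X × ι) :=
  {x | ∃ j : Fin (q + 3), ¬ (segPoint π x.1 x.2 j.val ∈ A ↔ segPoint π x.1 x.2 (j.val + 1) ∈ A)}

lemma segPoint_mem_iff {z : X} {k : ι} (hz : (z, k) ∉ cutSegments π A) {j : ℕ} (hj : j ≤ q + 3) :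
    segPoint π z k j ∈ A ↔ z ∈ baseSet A := by
  induction j with
  | zero => exact mem_baseSet.symm
  | succ j ih =>
    rw [← ih (by omega)]
    simp only [cutSegments, mem_filter_univ, not_exists, not_not] at hz
    exact (hz ⟨j, hj⟩).symm

variable (A) in
lemma card_cutSegments_le : #(cutSegments π A) ≤ cutCard (linkGraph m q π a) A := by
  refine card_le_cutCard (fun x e => ∃ j, segEdge π x.1 x.2 j = e) (fun x hx => ?_) ?_
  · obtain ⟨j, hj⟩ := (mem_filter_univ _).1 hx
    exact ⟨_, _, .inl (link_segPoint x.1 x.2 j), hj, j, rfl⟩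
  · rintro _ x x' ⟨j, rfl⟩ ⟨j', hj'⟩
    obtain ⟨hz, hk, -⟩ := segEdge_inj hj'
    exact (Prod.ext hz hk).symm

variable (A) in
lemma card_cutColumns_le : #(cutColumns A) ≤ cutCard (linkGraph m q π a) A := by
  refine card_le_cutCard (fun x e => ∃ y, NotTop (x.1, y) ∧
    e = s(.tree (clusterAbove (x.1, y)) x.2, .tree (x.1, y) x.2)) (fun x hx => ?_) ?_
  · obtain ⟨y, hy, hA⟩ := (mem_filter_univ _).1 hx
    exact ⟨_, _, .inl (.tree _ hy _ _), hA, y, hy, rfl⟩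
  · rintro _ x x' ⟨y, hy, rfl⟩ ⟨y', hy', he⟩
    have depth := clusterDepth_clusterAbove hy
    have depth' := clusterDepth_clusterAbove hy'
    simp only [Sym2.eq_iff, Vertex.tree.injEq] at he
    rcases he with ⟨-, hc, hi⟩ | ⟨⟨hc, -⟩, hc', -⟩
    · exact Prod.ext (Prod.ext_iff.1 hc).1 hi
    · rw [hc] at depth
      rw [← hc'] at depth'
      omega

variable (A) in
lemma card_cutLeaves_le : #(cutLeaves a A) ≤ cutCard (linkGraph m q π a) A := by
  refine card_le_cutCard (fun x e => e = s(.tree (x.1, Fin.last m) x.2, .base (a x)))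
    (fun x hx => ?_) ?_
  · obtain ⟨hx, hA⟩ := (mem_filter_univ _).1 hx
    exact ⟨_, _, .inl (.attach (x.1, Fin.last m) x.2 ⟨hx, rfl⟩), hA, rfl⟩
  · rintro _ x x' rfl he
    simp only [Sym2.eq_iff, Vertex.base.injEq, reduceCtorEq, false_and, or_false] at he
    exact a.injective he.2

lemma card_baseSet_le (hπ : IsExpandingFamily π) (hA : 2 * #(baseSet A) ≤ Fintype.card X) :
    #(baseSet A) ≤ 2 * #(cutSegments π A) := by
  have subset_union : (univ.biUnion fun k => (baseSet A).image (π k)) ⊆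
      baseSet A ∪ (cutSegments π A).image fun x => π x.2 x.1 := by
    simp only [subset_iff, mem_biUnion, mem_univ, true_and, mem_image, mem_union]
    rintro _ ⟨k, z, hz, rfl⟩
    by_cases hzk : (z, k) ∈ cutSegments π A
    · exact .inr ⟨_, hzk, rfl⟩
    · have := (segPoint_mem_iff hzk le_rfl).2 hz
      rw [segPoint_last] at this
      exact .inl (mem_baseSet.2 this)
  have card_le := (card_le_card subset_union).trans
    ((card_union_le _ _).trans (Nat.add_le_add_left card_image_le _))
  have := hπ _ hA
  omega

variable (π A) in
lemma card_le_of_cuts :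
    #A ≤ (#(endSet A) + #(cutColumns A)) * (m + 1) + #(baseSet A) +
      (#(baseSet A) * Fintype.card ι + #(cutSegments π A)) * (q + 2) := by
  let trees := (endSet A ∪ cutColumns A) ×ˢ (univ : Finset (Fin (m + 1)))
  let segs := ((baseSet A ×ˢ univ) ∪ cutSegments π A) ×ˢ (univ : Finset (Fin (q + 2)))
  have subset_union : A ⊆ trees.image (fun x => .tree (x.1.1, x.2) x.1.2) ∪
      (baseSet A).image .base ∪ segs.image fun x => .seg x.1.1 x.1.2 x.2 := by
    intro v hv
    simp only [trees, segs, mem_union, mem_image, mem_product, mem_univ, and_true]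
    cases v with
    | tree c i =>
      exact .inl (.inl ⟨((c.1, i), c.2),
        or_iff_not_imp_right.2 fun hc => (tree_mem_iff hc c.2).1 hv, rfl⟩)
    | base z => exact .inl (.inr ⟨z, mem_baseSet.2 hv, rfl⟩)
    | seg z k j =>
      refine .inr ⟨((z, k), j), or_iff_not_imp_right.2 fun hz => ?_, rfl⟩
      exact (segPoint_mem_iff hz (by omega)).1 (segPoint_succ z k j ▸ hv)
  have card_trees : #trees ≤ (#(endSet A) + #(cutColumns A)) * (m + 1) := by
    rw [card_product, card_univ, Fintype.card_fin]
    exact Nat.mul_le_mul_right _ (card_union_le _ _)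
  have card_segs : #segs ≤ (#(baseSet A) * Fintype.card ι + #(cutSegments π A)) * (q + 2) := by
    rw [card_product, card_univ, Fintype.card_fin]
    refine Nat.mul_le_mul_right _ ((card_union_le _ _).trans_eq ?_)
    rw [card_product, card_univ]
  refine (card_le_card subset_union).trans ((card_union_le _ _).trans (add_le_add
    ((card_union_le _ _).trans (add_le_add ?_ card_image_le)) ?_))
  · exact card_image_le.trans card_trees
  · exact card_image_le.trans card_segs

lemma card_le_mul_cutCard (hh : 0 < h) (hπ : IsExpandingFamily π)
    (hA : 2 * #(baseSet A) ≤ Fintype.card X) :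
    #A ≤ (8 * (m + 1) + 2 + (2 * Fintype.card ι + 1) * (q + 2)) *
      cutCard (linkGraph m q π a) A := by
  have segments := card_cutSegments_le (π := π) (a := a) A
  have columns := card_cutColumns_le (π := π) (a := a) A
  have leaves := card_cutLeaves_le (π := π) (a := a) A
  set κ := cutCard (linkGraph m q π a) A
  have base := (card_baseSet_le hπ hA).trans (Nat.mul_le_mul_left 2 segments)
  have ends := card_endSet_le (A := A) (a := a) hh
  calc #A ≤ (7 * κ + κ) * (m + 1) + 2 * κ + (2 * κ * Fintype.card ι + κ) * (q + 2) := by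
        refine (card_le_of_cuts π A).trans ?_
        gcongr
        omega
    _ = _ := by ring

theorem isExpander_linkGraph (hh : 0 < h) (hπ : IsExpandingFamily π) :
    IsExpander (linkGraph m q π a)
      (1 / (8 * (m + 1) + 2 + (2 * Fintype.card ι + 1) * (q + 2) : ℕ))
      (4 * K + 2 * Fintype.card ι + 2) := by
  refine ⟨ncard_neighborSet_linkGraph_le, fun S hS => ?_⟩
  rw [one_div_mul_eq_div, div_le_iff₀ (by positivity), mul_comm]
  norm_cast
  by_cases hbase : 2 * #(baseSet S) ≤ Fintype.card X
  · exact card_le_mul_cutCard hh hπ hbase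
  have card_le_compl : #S ≤ #Sᶜ := by
    have : 2 * #S ≤ Fintype.card (Vertex h m K q X ι) := by
      exact_mod_cast (le_div_iff₀' (by norm_num)).1 hS
    rw [card_compl]
    omega
  have baseSet_compl : baseSet Sᶜ = (baseSet S)ᶜ := by ext; simp [baseSet]
  rw [← cutCard_compl]
  refine card_le_compl.trans (card_le_mul_cutCard hh hπ ?_)
  rw [baseSet_compl, card_compl]
  omega

end Expansion

section Diameter

section Distance

variable {W : Type*} {G : SimpleGraph W} {u v w : W}

lemma edist_le_add {k l : ℕ} (huv : G.edist u v ≤ k) (hvw : G.edist v w ≤ l) :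
    G.edist u w ≤ (k + l : ℕ) := by
  push_cast
  exact SimpleGraph.edist_triangle.trans (add_le_add huv hvw)

lemma edist_mono {k l : ℕ} (huv : G.edist u v ≤ k) (hkl : k ≤ l) : G.edist u v ≤ l :=
  huv.trans (by exact_mod_cast hkl)

lemma edist_le_one (hG : G.Adj u w) : G.edist u w ≤ (1 : ℕ) :=
  (SimpleGraph.edist_eq_one_iff_adj.2 hG).le

lemma edist_chain_le {f : ℕ → W} {n : ℕ} (hf : ∀ j < n, G.Adj (f j) (f (j + 1))) :
    G.edist (f 0) (f n) ≤ n := by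
  induction n with
  | zero => simp
  | succ n ih =>
    exact edist_le_add (ih fun j hj => hf j (by omega)) (edist_le_one (hf n n.lt_succ_self))

lemma diam_le_of_edist_le {n : ℕ} (hG : ∀ u w, G.edist u w ≤ n) : G.diam ≤ n :=
  ENat.toNat_le_of_le_natCast (SimpleGraph.ediam_le_of_edist_le hG)

lemma le_add_length {f : W → ℕ} (hf : ∀ u w, G.Adj u w → f w ≤ f u + 1) (walk : G.Walk u w) :
    f w ≤ f u + walk.length := by
  induction walk with
  | nil => rfl
  | cons hadj walk ih =>
    have := hf _ _ hadj
    rw [SimpleGraph.Walk.length_cons]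
    omega

lemma le_add_diam_component [Finite W] {f : W → ℕ} (hf : ∀ u w, G.Adj u w → f w ≤ f u + 1)
    (hvw : G.Reachable v w) : f w ≤ f v + (G.induce (G.connectedComponentMk v).supp).diam := by
  have connected : (G.induce (G.connectedComponentMk v).supp).Connected :=
    (G.connectedComponentMk v).connected_toSimpleGraph
  have := connected.nonempty
  let v' : (G.connectedComponentMk v).supp := ⟨v, rfl⟩
  let w' : (G.connectedComponentMk v).supp := ⟨w, SimpleGraph.ConnectedComponent.sound hvw.symm⟩
  obtain ⟨walk, hwalk⟩ := connected.exists_walk_length_eq_dist v' w'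
  calc f w ≤ f v + walk.length :=
        le_add_length (f := fun z : (G.connectedComponentMk v).supp => f z.1)
          (fun u w => hf u w) walk
    _ ≤ _ := Nat.add_le_add_left (hwalk.trans_le
      (SimpleGraph.dist_le_diam (SimpleGraph.connected_iff_ediam_ne_top.1 connected))) _

end Distance

open Finset

variable {h m K q : ℕ} {X ι : Type} {π : ι → Equiv.Perm X} {a : Fin (2 ^ h) × Fin K ↪ X}

section Base

variable [DecidableEq X] [Fintype ι]

/-- The points reached from `z` in at most `r` steps `x ↦ π i x`. -/
def permBall (π : ι → Equiv.Perm X) (z : X) : ℕ → Finset X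
  | 0 => {z}
  | r + 1 => permBall π z r ∪ univ.biUnion fun i => (permBall π z r).image (π i)

variable [Fintype X]

lemma card_lt_or_le_card_permBall (hπ : IsExpandingFamily π) (z : X) (r : ℕ) :
    Fintype.card X < 2 * #(permBall π z r) ∨ 3 ^ r ≤ 2 ^ r * #(permBall π z r) := by
  induction r with
  | zero => simp [permBall]
  | succ r ih =>
    have ball_le : #(permBall π z r) ≤ #(permBall π z (r + 1)) := card_le_card subset_union_left
    have image_le := card_le_card
      (subset_union_right : _ ⊆ permBall π z r ∪ univ.biUnion fun i => (permBall π z r).image (π i))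
    change _ ≤ #(permBall π z (r + 1)) at image_le
    rcases lt_or_ge (Fintype.card X) (2 * #(permBall π z r)) with hbig | hsmall
    · left; omega
    · right
      have expand := hπ (permBall π z r) hsmall
      calc 3 ^ (r + 1) = 3 * 3 ^ r := pow_succ' 3 r
        _ ≤ 3 * (2 ^ r * #(permBall π z r)) := Nat.mul_le_mul_left _ (ih.resolve_left hsmall.not_gt)
        _ = 2 ^ r * (3 * #(permBall π z r)) := by ring
        _ ≤ 2 ^ r * (2 * #(permBall π z (r + 1))) := Nat.mul_le_mul_left _ (by omega)
        _ = 2 ^ (r + 1) * #(permBall π z (r + 1)) := by ring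

lemma exists_mem_permBall_inter (hπ : IsExpandingFamily π) {r : ℕ}
    (hr : Fintype.card X * 2 ^ r < 2 * 3 ^ r) (z z' : X) :
    ∃ y, y ∈ permBall π z r ∧ y ∈ permBall π z' r := by
  have big (z) : Fintype.card X < 2 * #(permBall π z r) := by
    refine (card_lt_or_le_card_permBall hπ z r).elim id fun hle => ?_
    refine Nat.lt_of_mul_lt_mul_right (a := 2 ^ r) (hr.trans_le ?_)
    linarith
  obtain ⟨y, hy⟩ := inter_nonempty_of_card_lt_card_add_card (subset_univ (permBall π z r))
    (subset_univ (permBall π z' r)) (by have := big z; have := big z'; rw [card_univ]; omega)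
  exact ⟨y, mem_inter.1 hy⟩

end Base

lemma edist_segPoint_le (z : X) (k : ι) {j : ℕ} (hj : j ≤ q + 3) :
    (linkGraph m q π a).edist (.base z) (segPoint π z k j) ≤ j :=
  edist_chain_le (f := segPoint π z k) fun i hi => .inl (link_segPoint z k ⟨i, hi.trans_le hj⟩)

lemma edist_le_of_mem_permBall [DecidableEq X] [Fintype ι] {z y : X} {r : ℕ}
    (hy : y ∈ permBall π z r) :
    (linkGraph m q π a).edist (.base z) (.base y) ≤ (r * (q + 3) : ℕ) := by
  induction r generalizing y with
  | zero =>
    obtain rfl := mem_singleton.1 hy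
    simp
  | succ r ih =>
    simp only [permBall, mem_union, mem_biUnion, mem_univ, true_and, mem_image] at hy
    rcases hy with hy | ⟨k, y, hy, rfl⟩
    · exact edist_mono (ih hy) (Nat.mul_le_mul_right _ r.le_succ)
    · rw [← segPoint_last (h := h) (m := m) (K := K), Nat.succ_mul]
      exact edist_le_add (ih hy) (edist_segPoint_le y k le_rfl)

lemma edist_base_base_le [Fintype X] [DecidableEq X] [Fintype ι] (hπ : IsExpandingFamily π) {r : ℕ}
    (hr : Fintype.card X * 2 ^ r < 2 * 3 ^ r) (z z' : X) :
    (linkGraph m q π a).edist (.base z) (.base z') ≤ (2 * r * (q + 3) : ℕ) := by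
  obtain ⟨y, hy, hy'⟩ := exists_mem_permBall_inter hπ hr z z'
  have back := edist_le_of_mem_permBall (m := m) (q := q) (a := a) hy'
  rw [SimpleGraph.edist_comm] at back
  exact edist_mono (edist_le_add (edist_le_of_mem_permBall hy) back) (by linarith)

variable (h m) in
/-- The top of the stem. -/
def topCluster : Cluster h m := (⟨0, Nat.two_pow_pos h⟩, 0)

lemma eq_topCluster {c : Cluster h m} (hc : ¬ NotTop c) : c = topCluster h m := by
  simp only [NotTop, not_or, not_lt, Nat.le_zero] at hc
  exact Prod.ext (Fin.ext hc.1) (Fin.ext hc.2)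

lemma exists_clusterAbove_eq (hh : 0 < h) {c : Cluster h m} (hc : ¬ IsBottom c) :
    ∃ c', NotTop c' ∧ clusterAbove c' = c := by
  obtain ⟨⟨x, hx⟩, ⟨y, hy⟩⟩ := c
  rcases eq_or_ne y m with rfl | hne
  · have even := dvd_pow_self 2 hh.ne'
    have inner : ¬ 2 ^ h ≤ 2 * x := fun leaf => hc ⟨leaf, rfl⟩
    refine ⟨(⟨2 * x + 1, by omega⟩, 0), .inl (Nat.succ_pos _), Prod.ext (Fin.ext ?_) rfl⟩
    simp only [clusterAbove, Fin.val_zero, if_true]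
    omega
  · exact ⟨(⟨x, hx⟩, ⟨y + 1, by omega⟩), .inr (Nat.succ_pos _), rfl⟩

lemma clusterDepth_le (c : Cluster h m) : clusterDepth c ≤ (m + 1) * h + m :=
  add_le_add (Nat.mul_le_mul_left _ (Nat.size_le.2 c.1.2)) (Nat.lt_succ_iff.1 c.2.2)

lemma vertexDepth_le (v : Vertex h m K q X ι) : vertexDepth v ≤ (m + 1) * h + m := by
  cases v with
  | tree c i => exact clusterDepth_le c
  | _ => exact le_rfl

lemma edist_topCluster_le (c : Cluster h m) (i : Fin K) :
    (linkGraph m q π a).edist (.tree c i) (.tree (topCluster h m) i) ≤ clusterDepth c := by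
  generalize hn : clusterDepth c = n
  induction n generalizing c with
  | zero =>
    have not_notTop : ¬ NotTop c := fun hc => by have := clusterDepth_clusterAbove hc; omega
    simp [eq_topCluster not_notTop]
  | succ n ih =>
    by_cases hc : NotTop c
    · rw [Nat.add_comm]
      have := clusterDepth_clusterAbove hc
      exact edist_le_add (edist_le_one (.inr (.tree c hc i i))) (ih (clusterAbove c) (by omega))
    · simp [eq_topCluster hc]

lemma edist_top_top_le (hh : 0 < h) (i j : Fin K) :
    (linkGraph m q π a).edist (.tree (topCluster h m) i) (.tree (topCluster h m) j) ≤ (2 : ℕ) := by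
  have not_bottom : ¬ IsBottom (topCluster h m) := fun hc => absurd hc.1 (by simp [topCluster])
  obtain ⟨c, hc, above⟩ := exists_clusterAbove_eq hh not_bottom
  have down (k) : (linkGraph m q π a).Adj (.tree (topCluster h m) k) (.tree c i) :=
    .inl (above ▸ .tree c hc k i)
  exact edist_le_add (edist_le_one (down i)) (edist_le_one (down j).symm)

lemma exists_edist_tree_base_le (hh : 0 < h) (c : Cluster h m) (i : Fin K) :
    ∃ z, (linkGraph m q π a).edist (.tree c i) (.base z) ≤
      ((m + 1) * h + m - clusterDepth c + 1 : ℕ) := by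
  generalize hn : (m + 1) * h + m - clusterDepth c = n
  induction n generalizing c with
  | zero =>
    have bottom : IsBottom c := by
      by_contra hc
      obtain ⟨c', hc', rfl⟩ := exists_clusterAbove_eq hh hc
      have := clusterDepth_clusterAbove hc'
      have := clusterDepth_le c'
      omega
    exact ⟨_, edist_le_one (.inl (.attach c i bottom))⟩
  | succ n ih =>
    have not_bottom : ¬ IsBottom c := fun hc => by rw [clusterDepth_of_isBottom hc] at hn; omega
    obtain ⟨c, hc, rfl⟩ := exists_clusterAbove_eq hh not_bottom
    have := clusterDepth_clusterAbove hc
    obtain ⟨z, hz⟩ := ih c (by omega)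
    exact ⟨z, edist_mono (edist_le_add (edist_le_one (.inl (.tree c hc i i))) hz) (by omega)⟩

lemma exists_edist_base_le (hh : 0 < h) (v : Vertex h m K q X ι) :
    ∃ z, (linkGraph m q π a).edist v (.base z) ≤
      ((m + 1) * h + m - vertexDepth v + (q + 2) : ℕ) := by
  cases v with
  | tree c i =>
    obtain ⟨z, hz⟩ := exists_edist_tree_base_le hh c i
    exact ⟨z, edist_mono hz (by simp only [vertexDepth]; omega)⟩
  | base z => exact ⟨z, by simp⟩
  | seg z k j =>
    refine ⟨z, ?_⟩
    rw [SimpleGraph.edist_comm, ← segPoint_succ (π := π)]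
    exact edist_mono (edist_segPoint_le z k (by omega)) (by omega)

/-- Two vertices at total depth less than the depth of the leaves are joined through the top of the
stem, any other two through the base. -/
lemma edist_linkGraph_le [Fintype X] [DecidableEq X] [Fintype ι] (hh : 0 < h)
    (hπ : IsExpandingFamily π) {r : ℕ} (hr : Fintype.card X * 2 ^ r < 2 * 3 ^ r)
    (u w : Vertex h m K q X ι) :
    (linkGraph m q π a).edist u w ≤ ((m + 1) * h + m + 2 * r * (q + 3) + 2 * (q + 2) : ℕ) := by
  by_cases hdepth : (m + 1) * h + m ≤ vertexDepth u + vertexDepth w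
  · obtain ⟨z, hz⟩ := exists_edist_base_le (π := π) (a := a) hh u
    obtain ⟨z', hz'⟩ := exists_edist_base_le (π := π) (a := a) hh w
    rw [SimpleGraph.edist_comm] at hz'
    have := vertexDepth_le u
    have := vertexDepth_le w
    exact edist_mono (edist_le_add (edist_le_add hz (edist_base_base_le hπ hr z z')) hz') (by omega)
  · rcases u with ⟨c, i⟩ | _ | _ <;> rcases w with ⟨c', i'⟩ | _ | _ <;>
      simp only [vertexDepth] at hdepth <;> try omega
    have to_top := edist_topCluster_le (q := q) (π := π) (a := a) c' i'
    rw [SimpleGraph.edist_comm] at to_top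
    exact edist_mono (edist_le_add (edist_le_add (edist_topCluster_le c i)
      (edist_top_top_le hh i i')) to_top) (by omega)

theorem diam_linkGraph_le [Fintype X] [DecidableEq X] [Fintype ι] (hh : 0 < h)
    (hπ : IsExpandingFamily π) {r : ℕ} (hr : Fintype.card X * 2 ^ r < 2 * 3 ^ r) :
    (linkGraph m q π a).diam ≤ (m + 1) * h + m + 2 * r * (q + 3) + 2 * (q + 2) :=
  diam_le_of_edist_le (edist_linkGraph_le hh hπ hr)

end Diameter

section LongComponent

open Finset

variable {h m K q : ℕ} {X ι : Type} {π : ι → Equiv.Perm X} {a : Fin (2 ^ h) × Fin K ↪ X}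

/-- The graph with edge set `s`, the outcome of the percolation in which the edges of `s` are
retained. -/
abbrev edgeGraph {W : Type*} (s : Finset (Sym2 W)) : SimpleGraph W := .fromEdgeSet s

/-- The edges from the `i`-th vertex of the cluster above `c` down to `c`. -/
def downEdges (c : Cluster h m) (i : Fin K) : Finset (Sym2 (Vertex h m K q X ι)) :=
  univ.image fun j => s(.tree (clusterAbove c) i, .tree c j)

lemma mem_downEdges {c : Cluster h m} {i : Fin K} {e : Sym2 (Vertex h m K q X ι)} :
    e ∈ downEdges c i ↔ ∃ j, s(.tree (clusterAbove c) i, .tree c j) = e := by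
  simp only [downEdges, mem_image, mem_univ, true_and]

lemma clusterAbove_ne {c : Cluster h m} (hc : NotTop c) : clusterAbove c ≠ c := fun heq => by
  have := clusterDepth_clusterAbove hc
  rw [heq] at this
  omega

lemma card_downEdges {c : Cluster h m} (hc : NotTop c) (i : Fin K) :
    #(downEdges c i : Finset (Sym2 (Vertex h m K q X ι))) = K := by
  rw [downEdges, card_image_of_injective, card_univ, Fintype.card_fin]
  intro j j' hj
  simp only [Sym2.eq_iff, Vertex.tree.injEq, true_and] at hj
  exact hj.elim id fun hswap => absurd hswap.1.1 (clusterAbove_ne hc)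

lemma downEdges_subset [Fintype X] [Fintype ι] {c : Cluster h m} (hc : NotTop c) (i : Fin K) :
    downEdges c i ⊆ edgeFinset' (linkGraph m q π a) := fun e he => by
  obtain ⟨j, rfl⟩ := mem_downEdges.1 he
  exact (mem_filter_univ _).2 (.inl (.tree c hc i j))

/-- Every vertex just above a cluster of the column `y` is joined to this cluster by an edge in
`s`. -/
def GoodColumn (y : ℕ) (s : Finset (Sym2 (Vertex h m K q X ι))) : Prop :=
  ∀ c : Cluster h m, c.1.val = y → ∀ i, ¬ Disjoint (downEdges c i) s

/-- The column of a vertex of the tree; other vertices are given the column of the stem. -/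
def vertexColumn : Vertex h m K q X ι → ℕ
  | .tree c _ => c.1.val
  | _ => 0

lemma clusterAbove_fst_le (c : Cluster h m) : (clusterAbove c).1 ≤ c.1 := by
  rw [clusterAbove]
  split_ifs
  · exact Nat.div_le_self _ _
  · exact le_rfl

lemma ignores_goodColumn (e : Sym2 (Vertex h m K q X ι)) (y : ℕ)
    (he : (e.map vertexColumn).sup ≠ y) : Ignores (GoodColumn y) e := by
  refine fun s => propext (forall₃_congr fun c hc i =>
    not_congr (iff_of_eq (ignores_disjoint (fun hmem => he ?_) s)))
  obtain ⟨j, rfl⟩ := mem_downEdges.1 hmem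
  exact (max_eq_right (Fin.le_def.1 (clusterAbove_fst_le c))).trans hc

lemma bernProb_not_goodColumn_le [Fintype X] [Fintype ι] {p : ℝ} (hp0 : 0 ≤ p) (hp1 : p ≤ 1) {y : ℕ}
    (hy : 0 < y) (hyh : y < 2 ^ h) :
    bernProb p (edgeFinset' (linkGraph m q π a)) (fun s => ¬ GoodColumn y s) ≤
      (m + 1) * K * (1 - p) ^ K := by
  set E := edgeFinset' (linkGraph m q π a)
  let F (x : Fin (m + 1) × Fin K) : Finset (Sym2 (Vertex h m K q X ι)) :=
    downEdges (⟨y, hyh⟩, x.1) x.2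
  calc bernProb p E (fun s => ¬ GoodColumn y s)
      ≤ bernProb p E (fun s => ∃ x ∈ univ, Disjoint (F x) s) := by
        refine bernProb_mono hp0 hp1 fun s _ hs => ?_
        simp only [GoodColumn, not_forall, not_not] at hs
        obtain ⟨⟨x, k⟩, rfl, i, hi⟩ := hs
        exact ⟨(k, i), mem_univ _, hi⟩
    _ ≤ ∑ x, bernProb p E (fun s => Disjoint (F x) s) := bernProb_exists_le hp0 hp1 _ _ _
    _ = ∑ x : Fin (m + 1) × Fin K, (1 - p) ^ K := sum_congr rfl fun x _ => by
        rw [bernProb_disjoint p (downEdges_subset (.inl hy) x.2), card_downEdges (.inl hy)]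
    _ = (m + 1) * K * (1 - p) ^ K := by simp

variable {s : Finset (Sym2 (Vertex h m K q X ι))}

lemma exists_reachable_of_not_disjoint {c : Cluster h m} (hc : NotTop c) {i : Fin K}
    (hs : ¬ Disjoint (downEdges c i) s) :
    ∃ j, (edgeGraph s).Reachable (.tree (clusterAbove c) i) (.tree c j) := by
  obtain ⟨e, he, hes⟩ := not_disjoint_iff.1 hs
  obtain ⟨j, rfl⟩ := mem_downEdges.1 he
  refine ⟨j, SimpleGraph.Adj.reachable ((SimpleGraph.fromEdgeSet_adj _).2 ⟨hes, fun heq => ?_⟩)⟩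
  injection heq with heq
  exact clusterAbove_ne hc heq

lemma exists_reachable_of_goodColumn {x : Fin (2 ^ h)} (hx : 0 < x.val) (hs : GoodColumn x.val s)
    (i : Fin K) (k : Fin (m + 1)) :
    ∃ j, (edgeGraph s).Reachable (.tree (clusterAbove (x, 0)) i) (.tree (x, k) j) := by
  have enter (k i) := exists_reachable_of_not_disjoint (.inl hx) (hs (x, k) rfl i)
  obtain ⟨k, hk⟩ := k
  induction k with
  | zero => exact enter 0 i
  | succ k ih =>
    obtain ⟨j, hj⟩ := ih (by omega)
    obtain ⟨j', hj'⟩ := enter ⟨k + 1, hk⟩ j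
    exact ⟨j', hj.trans hj'⟩

lemma clusterAbove_eq_of_div_two_eq {x y : Fin (2 ^ h)} (hxy : y.val / 2 = x.val) :
    clusterAbove ((y, 0) : Cluster h m) = (x, Fin.last m) := by
  simp only [clusterAbove, Fin.val_zero, if_true]
  exact Prod.ext (Fin.ext hxy) rfl

/-- The bounds on `x` say that the nodes `k` levels below `x` are leaves. -/
lemma exists_reachable_of_goodRay {k : ℕ} {x : Fin (2 ^ h)} (hxl : 2 ^ h ≤ 2 ^ (k + 1) * x.val)
    (hxu : (x.val + 1) * 2 ^ k ≤ 2 ^ h) (hs : GoodRay GoodColumn k x.val s) (i : Fin K) :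
    ∃ w, vertexDepth w = (m + 1) * h + m ∧
      (edgeGraph s).Reachable (.tree (clusterAbove (x, 0)) i) w := by
  have hx : 0 < x.val := Nat.pos_of_mul_pos_left ((Nat.two_pow_pos h).trans_le hxl)
  induction k generalizing x i with
  | zero =>
    obtain ⟨j, hj⟩ := exists_reachable_of_goodColumn hx hs i (Fin.last m)
    exact ⟨.tree _ j, clusterDepth_of_isBottom (c := (x, Fin.last m)) ⟨by simpa using hxl, rfl⟩, hj⟩
  | succ k ih =>
    obtain ⟨j, hj⟩ := exists_reachable_of_goodColumn hx hs.1 i (Fin.last m)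
    have through_child (y) (hyx : y / 2 = x.val) (hy : GoodRay GoodColumn k y s) :
        ∃ w, vertexDepth w = (m + 1) * h + m ∧
          (edgeGraph s).Reachable (.tree (clusterAbove (x, 0)) i) w := by
      have hyl : 2 ^ h ≤ 2 ^ (k + 1) * y := hxl.trans (by
        rw [pow_succ _ (k + 1), mul_assoc]
        exact Nat.mul_le_mul_left _ (by omega))
      have hyu : (y + 1) * 2 ^ k ≤ 2 ^ h := hxu.trans' (by
        rw [pow_succ', ← mul_assoc]
        exact Nat.mul_le_mul_right _ (by omega))
      have hylt : y < 2 ^ h := (Nat.le_mul_of_pos_right (y + 1) (Nat.two_pow_pos k)).trans hyu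
      obtain ⟨w, hw, hr⟩ := ih (x := ⟨y, hylt⟩) hyl hyu hy j
        (Nat.pos_of_mul_pos_left ((Nat.two_pow_pos h).trans_le hyl))
      rw [clusterAbove_eq_of_div_two_eq hyx] at hr
      exact ⟨w, hw, hj.trans hr⟩
    exact hs.2.elim (through_child _ (by omega)) (through_child _ (by omega))

theorem bernProb_not_exists_reachable_le [Fintype X] [Fintype ι] {p : ℝ} (hp0 : 0 ≤ p) (hp1 : p ≤ 1)
    (hh : 0 < h) (hη : (m + 1) * K * (1 - p) ^ K ≤ 1 / 4) (i : Fin K) :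
    bernProb p (edgeFinset' (linkGraph m q π a)) (fun s => ¬ ∃ w, vertexDepth w = (m + 1) * h + m ∧
      (edgeGraph s).Reachable (stemVertex i) w) ≤ 2 * ((m + 1) * K * (1 - p) ^ K) := by
  obtain ⟨k, rfl⟩ := Nat.exists_eq_add_one.2 hh
  have η_nonneg : (0 : ℝ) ≤ (m + 1) * K * (1 - p) ^ K := by
    have := sub_nonneg.2 hp1
    positivity
  have pow_eq : (1 + 1) * 2 ^ k = 2 ^ (k + 1) := (pow_succ' 2 k).symm
  have ray_le := bernProb_not_goodRay_le (E := edgeFinset' (linkGraph m q π a)) (k := k) hp0 hp1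
    η_nonneg hη ignores_goodColumn one_pos
    fun y hy hyk => bernProb_not_goodColumn_le hp0 hp1 hy (pow_eq ▸ hyk)
  refine (bernProb_mono hp0 hp1 fun s _ hs hray => hs ?_).trans ray_le
  let root : Fin (2 ^ (k + 1)) := ⟨1, Nat.one_lt_two_pow k.succ_ne_zero⟩
  rw [stemVertex, ← clusterAbove_eq_of_div_two_eq (y := root) (Nat.div_eq_of_lt one_lt_two)]
  exact exists_reachable_of_goodRay (mul_one _).ge pow_eq.le hray i

end LongComponent

section SmallComponents

open Finset

lemma card_compVerts_le {W : Type} [Fintype W] {G : SimpleGraph W} {u : W} {Z : Finset W}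
    (hu : u ∈ Z) (hZ : ∀ x ∈ Z, ∀ y, G.Adj x y → y ∈ Z) :
    #(compVerts G (G.connectedComponentMk u)) ≤ #Z := by
  refine card_le_card fun w hw => ?_
  obtain ⟨walk⟩ := (SimpleGraph.ConnectedComponent.exact ((mem_filter_univ w).1 hw)).symm
  clear hw
  induction walk with
  | nil => exact hu
  | cons hadj _ ih => exact ih (hZ _ hu _ hadj)

variable {h m K q : ℕ} {X ι : Type} {π : ι → Equiv.Perm X} {a : Fin (2 ^ h) × Fin K ↪ X}

variable (π) in
/-- The edges of the segment from `z` to `π k z`. -/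
def segEdges (z : X) (k : ι) : Finset (Sym2 (Vertex h m K q X ι)) :=
  univ.image (segEdge π z k)

lemma card_segEdges (z : X) (k : ι) :
    #(segEdges π z k : Finset (Sym2 (Vertex h m K q X ι))) = q + 3 := by
  rw [segEdges, card_image_of_injective _ fun _ _ he => (segEdge_inj he).2.2, card_univ,
    Fintype.card_fin]

lemma pairwise_disjoint_segEdges : Pairwise fun z w : X × ι => Disjoint
    (segEdges π z.1 z.2 : Finset (Sym2 (Vertex h m K q X ι))) (segEdges π w.1 w.2) := by
  refine fun z w hzw => disjoint_left.2 fun e hz hw => hzw ?_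
  obtain ⟨j, -, rfl⟩ := mem_image.1 hz
  obtain ⟨j', -, he⟩ := mem_image.1 hw
  obtain ⟨hx, hk, -⟩ := segEdge_inj he
  exact Prod.ext hx.symm hk.symm

lemma segEdges_subset [Fintype X] [Fintype ι] (z : X) (k : ι) :
    segEdges π z k ⊆ edgeFinset' (linkGraph m q π a) := fun e he => by
  obtain ⟨j, -, rfl⟩ := mem_image.1 he
  exact (mem_filter_univ _).2 (.inl (link_segPoint z k j))

/-- The base points at the ends of the segment of `u`. -/
def nearBase (π : ι → Equiv.Perm X) : Vertex h m K q X ι → Finset X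
  | .tree _ _ => ∅
  | .base z => {z}
  | .seg z k _ => {z, π k z}

lemma card_nearBase_le (u : Vertex h m K q X ι) : #(nearBase π u) ≤ 2 := by
  cases u with
  | tree c i => exact Nat.zero_le _
  | base z => exact (card_singleton z).le.trans one_le_two
  | seg z k j => exact card_le_two

variable {s : Finset (Sym2 (Vertex h m K q X ι))} {C : Finset X} {u : Vertex h m K q X ι}

section Hull

/-- The condition under which `componentHull` contains the `n`-th point of the segment from `z` to
`π k z`: it is connected to `C` by retained edges of the segment, or `u` is on this segment. -/
def SegHull (π : ι → Equiv.Perm X) (s : Finset (Sym2 (Vertex h m K q X ι))) (C : Finset X)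
    (u : Vertex h m K q X ι) (z : X) (k : ι) (n : ℕ) : Prop :=
  (∃ j, u = .seg z k j) ∨ (z ∈ C ∧ ∀ i : Fin (q + 3), i.val < n → segEdge π z k i ∈ s) ∨
    (π k z ∈ C ∧ ∀ i : Fin (q + 3), n ≤ i.val → segEdge π z k i ∈ s)

/-- An upper bound for the component of `u` in the graph with edge set `s`, where `C` is a union of
clusters. -/
def componentHull (π : ι → Equiv.Perm X) (s : Finset (Sym2 (Vertex h m K q X ι))) (C : Finset X)
    (u : Vertex h m K q X ι) : Vertex h m K q X ι → Prop
  | .tree _ _ => True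
  | .base z => z ∈ C
  | .seg z k j => SegHull π s C u z k (j.val + 1)

lemma self_mem_componentHull (hu : nearBase π u ⊆ C) : componentHull π s C u u := by
  cases u with
  | tree c i => trivial
  | base z => exact hu (mem_singleton_self z)
  | seg z k j => exact .inl ⟨j, rfl⟩

lemma segHull_succ_iff {z : X} {k : ι} {n : Fin (q + 3)} (hn : segEdge π z k n ∈ s) :
    SegHull π s C u z k n.val ↔ SegHull π s C u z k (n.val + 1) := by
  have split (i : Fin (q + 3)) (hi : i.val = n.val) : segEdge π z k i ∈ s := by rwa [Fin.ext hi]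
  refine or_congr_right (or_congr (and_congr_right fun _ => ?_) (and_congr_right fun _ => ?_))
  · refine ⟨fun open_lt i hi => ?_, fun open_le i hi => open_le i (by omega)⟩
    exact (Nat.lt_succ_iff_lt_or_eq.1 hi).elim (open_lt i) (split i)
  · refine ⟨fun open_ge i hi => open_ge i (by omega), fun open_gt i hi => ?_⟩
    exact (Nat.eq_or_lt_of_le hi).elim (fun heq => split i heq.symm) (open_gt i)

variable (hu : nearBase π u ⊆ C) (hC : ∀ z k, segEdges π z k ⊆ s → (z ∈ C ↔ π k z ∈ C))
include hu hC

lemma segHull_zero_iff {z : X} {k : ι} : SegHull π s C u z k 0 ↔ z ∈ C := by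
  refine ⟨?_, fun hz => .inr (.inl ⟨hz, fun i hi => absurd hi i.val.not_lt_zero⟩)⟩
  rintro (⟨j, rfl⟩ | ⟨hz, -⟩ | ⟨hz, all_open⟩)
  · exact hu (mem_insert_self _ _)
  · exact hz
  · exact (hC z k (image_subset_iff.2 fun i _ => all_open i (Nat.zero_le _))).2 hz

lemma segHull_last_iff {z : X} {k : ι} : SegHull π s C u z k (q + 3) ↔ π k z ∈ C := by
  refine ⟨?_, fun hz => .inr (.inr ⟨hz, fun i hi => absurd i.2 hi.not_gt⟩)⟩
  rintro (⟨j, rfl⟩ | ⟨hz, all_open⟩ | ⟨hz, -⟩)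
  · exact hu (mem_insert_of_mem (mem_singleton_self _))
  · exact (hC z k (image_subset_iff.2 fun i _ => all_open i i.2)).1 hz
  · exact hz

lemma componentHull_segPoint_iff {z : X} {k : ι} {n : ℕ} (hn : n ≤ q + 3) :
    componentHull π s C u (segPoint π z k n) ↔ SegHull π s C u z k n := by
  rcases n with _ | n
  · exact (segHull_zero_iff hu hC).symm
  · rcases hn.lt_or_eq with hlt | heq
    · obtain ⟨j, rfl⟩ : ∃ j : Fin (q + 2), j.val = n := ⟨⟨n, by omega⟩, rfl⟩
      rw [segPoint_succ, componentHull]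
    · rw [heq, segPoint_last, componentHull, segHull_last_iff hu hC]

lemma componentHull_iff_of_link (ha : ∀ x, a x ∈ C) {v w : Vertex h m K q X ι}
    (hvw : Link π a v w) (hs : s(v, w) ∈ s) :
    componentHull π s C u v ↔ componentHull π s C u w := by
  have along (z : X) (k : ι) (n : Fin (q + 3)) (hn : segEdge π z k n ∈ s) :
      componentHull π s C u (segPoint π z k n.val) ↔
        componentHull π s C u (segPoint π z k (n.val + 1)) := by
    rw [componentHull_segPoint_iff hu hC n.2.le, componentHull_segPoint_iff hu hC n.2,
      segHull_succ_iff hn]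
  cases hvw with
  | tree c hc i j => rfl
  | attach c i hc => exact iff_of_true trivial (ha _)
  | start z k => exact along z k 0 hs
  | mid z k j j' hj =>
    have next := along z k j.succ
    rw [segEdge, Fin.val_succ, segPoint_succ, hj, segPoint_succ] at next
    exact next hs
  | finish z k =>
    have last := along z k (Fin.last (q + 2))
    rw [segEdge, ← Fin.succ_last, Fin.val_succ, segPoint_succ, Fin.val_last, segPoint_last] at last
    exact last hs

end Hull

lemma card_componentHull_le [Fintype X] [Fintype ι] (hu : nearBase π u ⊆ C) :
    #{v | componentHull π s C u v} ≤
      2 ^ h * (m + 1) * K + (1 + 2 * Fintype.card ι * (q + 2)) * #C := by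
  let trees : Finset (Vertex h m K q X ι) :=
    univ.image fun x : Cluster h m × Fin K => .tree x.1 x.2
  let outgoing : Finset (Vertex h m K q X ι) :=
    (C ×ˢ univ).image fun x : X × ι × Fin (q + 2) => .seg x.1 x.2.1 x.2.2
  let incoming : Finset (Vertex h m K q X ι) :=
    (C ×ˢ univ).image fun x : X × ι × Fin (q + 2) => .seg ((π x.2.1).symm x.1) x.2.1 x.2.2
  have cover : univ.filter (componentHull π s C u) ⊆
      trees ∪ C.image Vertex.base ∪ (outgoing ∪ incoming) := by
    intro v hv
    rw [mem_filter_univ] at hv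
    simp only [trees, outgoing, incoming, mem_union, mem_image, mem_product, mem_univ, true_and,
      and_true]
    cases v with
    | tree c i => exact .inl (.inl ⟨(c, i), rfl⟩)
    | base z => exact .inl (.inr ⟨z, hv, rfl⟩)
    | seg z k j =>
      rcases hv with ⟨j', rfl⟩ | ⟨hz, -⟩ | ⟨hz, -⟩
      · exact .inr (.inl ⟨(z, k, j), hu (mem_insert_self _ _), rfl⟩)
      · exact .inr (.inl ⟨(z, k, j), hz, rfl⟩)
      · exact .inr (.inr ⟨(π k z, k, j), hz, by simp⟩)
  calc #{v | componentHull π s C u v}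
      ≤ (#trees + #(C.image Vertex.base)) + (#outgoing + #incoming) :=
        (card_le_card cover).trans ((card_union_le _ _).trans
          (add_le_add (card_union_le _ _) (card_union_le _ _)))
    _ ≤ (2 ^ h * (m + 1) * K + #C) +
          (#C * (Fintype.card ι * (q + 2)) + #C * (Fintype.card ι * (q + 2))) := by
        refine add_le_add (add_le_add (card_image_le.trans_eq ?_) card_image_le)
          (add_le_add (card_image_le.trans_eq ?_) (card_image_le.trans_eq ?_)) <;>
        simp [card_product]
    _ = _ := by ring

variable [Fintype X]

/-- The union of the clusters meeting the leaves of the tree or the segment of `u`. -/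
def clustersNear (π : ι → Equiv.Perm X) (a : Fin (2 ^ h) × Fin K ↪ X)
    (s : Finset (Sym2 (Vertex h m K q X ι))) (u : Vertex h m K q X ι) : Finset X :=
  (univ.map a ∪ nearBase π u).biUnion fun x => segCluster π (segEdges π) univ x s

lemma subset_clustersNear : univ.map a ∪ nearBase π u ⊆ clustersNear π a s u :=
  fun x hx => mem_biUnion.2 ⟨x, hx, self_mem_segCluster _ _ _⟩

lemma mem_clustersNear_iff {z : X} {k : ι} (hz : segEdges π z k ⊆ s) :
    z ∈ clustersNear π a s u ↔ π k z ∈ clustersNear π a s u := by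
  have step : SegStep π (segEdges π) univ s z (π k z) :=
    ⟨mem_univ _, mem_univ _, k, .inl ⟨rfl, hz⟩⟩
  simp only [clustersNear, mem_biUnion, mem_segCluster]
  exact exists_congr fun x => and_congr_right fun _ =>
    ⟨fun hx => hx.tail step, fun hx => hx.tail (symm step)⟩

lemma card_clustersNear_le {M : ℕ} (hM : ∀ x, #(segCluster π (segEdges π) univ x s) ≤ M) :
    #(clustersNear π a s u) ≤ (2 ^ h * K + 2) * M := by
  refine (card_biUnion_le_card_mul _ _ M fun x _ => hM x).trans (Nat.mul_le_mul_right _ ?_)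
  refine (card_union_le _ _).trans (add_le_add (Eq.le ?_) (card_nearBase_le u))
  simp

variable [Fintype ι]

lemma card_compVerts_edgeGraph_le (hs : s ⊆ edgeFinset' (linkGraph m q π a)) {M : ℕ}
    (hM : ∀ x, #(segCluster π (segEdges π) univ x s) ≤ M)
    (comp : (edgeGraph s).ConnectedComponent) :
    #(compVerts (edgeGraph s) comp) ≤
      2 ^ h * (m + 1) * K + (1 + 2 * Fintype.card ι * (q + 2)) * ((2 ^ h * K + 2) * M) := by
  obtain ⟨u, rfl⟩ := comp.exists_rep
  have near := union_subset_iff.1 (subset_clustersNear (π := π) (a := a) (s := s) (u := u))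
  have leaves_mem (x) : a x ∈ clustersNear π a s u := near.1 (mem_map_of_mem a (mem_univ x))
  have link_iff {v w} := componentHull_iff_of_link (v := v) (w := w) near.2
    (fun z k => mem_clustersNear_iff) leaves_mem
  refine (card_compVerts_le (Z := {v | componentHull π s (clustersNear π a s u) u v})
    ((mem_filter_univ _).2 (self_mem_componentHull near.2)) fun v hv w hvw => ?_).trans
    ((card_componentHull_le near.2).trans
      (Nat.add_le_add_left (Nat.mul_le_mul_left _ (card_clustersNear_le hM)) _))
  have retained := ((SimpleGraph.fromEdgeSet_adj _).1 hvw).1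
  rw [mem_filter_univ] at hv ⊢
  rcases (mem_filter_univ _).1 (hs retained) with hlink | hlink
  · exact (link_iff hlink retained).1 hv
  · exact (link_iff hlink (Sym2.eq_swap ▸ retained)).2 hv

theorem bernProb_not_card_compVerts_le {p : ℝ} (hp0 : 0 ≤ p) (hp1 : p ≤ 1)
    (hpq : p ^ (q + 3) * (4 * Fintype.card ι) ≤ 1) {M : ℕ} (hM : 0 < M) :
    bernProb p (edgeFinset' (linkGraph m q π a))
      (fun s => ¬ ∀ comp : (edgeGraph s).ConnectedComponent, #(compVerts (edgeGraph s) comp) ≤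
        2 ^ h * (m + 1) * K + (1 + 2 * Fintype.card ι * (q + 2)) * ((2 ^ h * K + 2) * M)) ≤
      2 * Fintype.card X / M ^ 2 := by
  refine (bernProb_mono hp0 hp1 fun s hsE hs => ?_).trans
    (bernProb_exists_lt_card_segCluster_le (π := π) hp0 hp1 segEdges_subset card_segEdges
      pairwise_disjoint_segEdges hpq hM)
  by_contra! small
  exact hs (card_compVerts_edgeGraph_le hsE small)

end SmallComponents

section Transfer

open Finset

lemma bernProb_map {α β : Type*} (p : ℝ) (E : Finset α) (f : α ↪ β) (P : Finset β → Prop) :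
    bernProb p (E.map f) P = bernProb p E fun s => P (s.map f) := by
  symm
  refine sum_bij (fun s _ => s.map f) ?_ (fun s _ t _ => fun hst => map_injective f hst) ?_ ?_
  · exact fun s hs => mem_powerset.2 (map_subset_map.2 (mem_powerset.1 hs))
  · intro t ht
    obtain ⟨s, hs, rfl⟩ := subset_map_iff.1 (mem_powerset.1 ht)
    exact ⟨s, mem_powerset.2 hs, rfl⟩
  · exact fun s _ => by simp only [card_map]

section Iso

variable {V W : Type*} {G : SimpleGraph V} {G' : SimpleGraph W}

lemma ediam_le_of_iso (φ : G ≃g G') : G'.ediam ≤ G.ediam := by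
  have edist_le (u w : V) : G'.edist (φ u) (φ w) ≤ G.edist u w :=
    le_iInf fun walk => (SimpleGraph.edist_le (walk.map φ.toHom)).trans_eq (by simp)
  refine SimpleGraph.ediam_le_of_edist_le fun u w => ?_
  simpa using (edist_le (φ.symm u) (φ.symm w)).trans SimpleGraph.edist_le_ediam

lemma diam_eq_of_iso (φ : G ≃g G') : G'.diam = G.diam :=
  congrArg ENat.toNat ((ediam_le_of_iso φ).antisymm (ediam_le_of_iso φ.symm))

lemma diam_component_of_iso (φ : G ≃g G') (v : V) :
    (G'.induce (G'.connectedComponentMk (φ v)).supp).diam =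
      (G.induce (G.connectedComponentMk v).supp).diam :=
  diam_eq_of_iso (φ.induce (φ.toEquiv.bijOn fun w => by simp [φ.reachable_iff]))

end Iso

lemma edgeGraph_map {V W : Type*} (f : V ↪ W) (s : Finset (Sym2 V)) :
    edgeGraph (s.map f.sym2Map) = (edgeGraph s).map f := by
  have preimage_diagSet : f.sym2Map ⁻¹' Sym2.diagSet = Sym2.diagSet :=
    Set.ext fun e => Sym2.isDiag_map f.injective
  rw [← SimpleGraph.edgeSet_inj, SimpleGraph.edgeSet_map, SimpleGraph.edgeSet_fromEdgeSet,
    SimpleGraph.edgeSet_fromEdgeSet, coe_map, ← Set.image_sdiff_preimage, preimage_diagSet]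

variable {V W : Type} [Fintype V] [Fintype W]

lemma card_compVerts_of_iso {G : SimpleGraph V} {G' : SimpleGraph W} (φ : G ≃g G')
    (comp : G.ConnectedComponent) :
    #(compVerts G' (φ.connectedComponentEquiv comp)) = #(compVerts G comp) :=
  (card_equiv φ.toEquiv fun v => by simp [compVerts]).symm

lemma edgeFinset'_map (f : V ↪ W) (G : SimpleGraph V) :
    edgeFinset' (G.map f) = (edgeFinset' G).map f.sym2Map := by
  apply coe_injective
  simpa [edgeFinset'] using SimpleGraph.edgeSet_map f G

theorem percProb_map (e : V ≃ W) (G : SimpleGraph V) (p : ℝ) (P : SimpleGraph W → Prop) :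
    percProb (G.map e) p P = percProb G p fun H => P (H.map e) := by
  change bernProb p (edgeFinset' (G.map e.toEmbedding)) (fun s => P (edgeGraph s)) =
    bernProb p _ (fun s => P ((edgeGraph s).map e.toEmbedding))
  simp only [edgeFinset'_map, bernProb_map, edgeGraph_map]

variable [DecidableEq V] [DecidableEq W]

lemma cutCard_map (e : V ≃ W) (G : SimpleGraph V) (S : Finset V) :
    cutCard (G.map e) (S.map e.toEmbedding) = cutCard G S := by
  have cut_iff (e' : Sym2 V) : (∃ x ∈ S.map e.toEmbedding, ∃ y, y ∉ S.map e.toEmbedding ∧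
      e.toEmbedding.sym2Map e' = s(x, y)) ↔ ∃ x ∈ S, ∃ y, y ∉ S ∧ e' = s(x, y) := by
    constructor
    · rintro ⟨x, hx, y, hy, he⟩
      refine ⟨e.symm x, mem_map_equiv.1 hx, e.symm y, mt mem_map_equiv.2 hy,
        e.toEmbedding.sym2Map.injective ?_⟩
      simp [he]
    · rintro ⟨x, hx, y, hy, rfl⟩
      exact ⟨e x, by simpa, e y, by simpa, rfl⟩
  have edges := edgeFinset'_map e.toEmbedding G
  rw [Equiv.coe_toEmbedding] at edges
  rw [cutCard, edges, filter_map, card_map, cutCard]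
  exact congrArg card (filter_congr fun e' _ => cut_iff e')

theorem IsExpander.map {G : SimpleGraph V} {b : ℝ} {d : ℕ} (hG : IsExpander G b d) (e : V ≃ W) :
    IsExpander (G.map e) b d := by
  refine ⟨fun w => ?_, fun S hS => ?_⟩
  · obtain ⟨v, rfl⟩ := e.surjective w
    exact (Nat.card_congr ((SimpleGraph.Iso.map e G).mapNeighborSet v)).symm.trans_le (hG.1 v)
  · obtain ⟨S, rfl⟩ := e.finsetCongr.surjective S
    rw [Equiv.finsetCongr_apply, card_map, ← Fintype.card_congr e] at hS
    rw [Equiv.finsetCongr_apply, card_map, cutCard_map]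
    exact hG.2 S hS

end Transfer

section Parameters

lemma exists_pow_add_mul_le_one {p : ℝ} (hp0 : 0 ≤ p) (hp1 : p < 1) (k : ℕ) {c : ℝ}
    (hc : 0 < c) :
    ∃ n : ℕ, p ^ (n + k) * c ≤ 1 := by
  obtain ⟨n, hn⟩ := exists_pow_lt_of_lt_one (show 0 < 1 / c by positivity) hp1
  refine ⟨n, ?_⟩
  calc p ^ (n + k) * c ≤ p ^ n * c := by
        gcongr ?_ * c
        exact pow_le_pow_of_le_one hp0 hp1.le (n.le_add_right k)
    _ ≤ 1 := ((lt_div_iff₀ hc).1 hn).le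

lemma exists_mul_pow_le {r c : ℝ} (hr0 : 0 ≤ r) (hr1 : r < 1) {η : ℝ} (hη : 0 < η) :
    ∃ K : ℕ, 0 < K ∧ c * K * r ^ K ≤ η := by
  have lim := (tendsto_self_mul_const_pow_of_lt_one hr0 hr1).const_mul c
  rw [mul_zero] at lim
  obtain ⟨K, hK0, hK⟩ :=
    ((Filter.eventually_gt_atTop 0).and (lim.eventually (gt_mem_nhds hη))).exists
  exact ⟨K, hK0, by linarith⟩

lemma exists_le_mul_succ {ε : ℝ} (hε : 0 < ε) (x : ℝ) : ∃ m : ℕ, x ≤ ε * (m + 1) := by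
  obtain ⟨m, hm⟩ := exists_nat_ge (x / ε)
  exact ⟨m, by linarith [(div_le_iff₀' hε).1 hm]⟩

lemma exists_div_sq_le {ε : ℝ} (hε : 0 < ε) (x : ℝ) : ∃ c : ℕ, 0 < c ∧ x / (c : ℝ) ^ 2 ≤ ε := by
  obtain ⟨m, hm⟩ := exists_le_mul_succ hε x
  refine ⟨m + 1, m.succ_pos, (div_le_iff₀ (by positivity)).2 (hm.trans ?_)⟩
  push_cast
  gcongr
  exact le_self_pow₀ (by simp) two_ne_zero

lemma exists_height (l n K B : ℕ) :
    ∃ h : ℕ, 0 < h ∧ l ≤ h ∧ n ≤ 16 ^ h ∧ 2 ^ h * K ≤ 16 ^ h ∧ B ≤ 16 ^ h := by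
  have le_sixteen_pow {x h : ℕ} (hx : x ≤ h) : x ≤ 16 ^ h :=
    hx.trans (Nat.lt_pow_self (by norm_num)).le
  refine ⟨l + n + K + B + 1, by omega, by omega, le_sixteen_pow (by omega), ?_,
    le_sixteen_pow (by omega)⟩
  rw [show 16 = 2 * 8 from rfl, mul_pow]
  gcongr
  exact (Nat.lt_pow_self (by norm_num : 1 < 8)).le.trans' (by omega)

lemma card_bound_le (h A B K c : ℕ) :
    2 ^ h * A * K + B * ((2 ^ h * K + 2) * (c * 4 ^ h)) ≤ (A * K + B * ((K + 2) * c)) * 8 ^ h := by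
  have eight_pow : (8 : ℕ) ^ h = 2 ^ h * 4 ^ h := by norm_num [← mul_pow]
  have two_le : 2 ≤ 2 ^ h * 2 := Nat.le_mul_of_pos_left 2 (Nat.two_pow_pos h)
  calc 2 ^ h * A * K + B * ((2 ^ h * K + 2) * (c * 4 ^ h))
      ≤ 8 ^ h * A * K + B * ((2 ^ h * K + 2 ^ h * 2) * (c * 4 ^ h)) := by
        gcongr
        norm_num
    _ = _ := by rw [eight_pow]; ring

lemma mul_pow_le_rpow {h a n : ℕ} (ha : a ^ 8 ≤ 16 ^ h) (hn : 16 ^ h ≤ n) :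
    ((a * 8 ^ h : ℕ) : ℝ) ≤ (n : ℝ) ^ ((1 : ℝ) - 1 / 8) := by
  have pow_eight_le : (a * 8 ^ h) ^ 8 ≤ n ^ 7 :=
    calc (a * 8 ^ h) ^ 8 = a ^ 8 * (16 ^ h) ^ 6 := by
          rw [mul_pow, pow_right_comm, pow_right_comm 16]
          norm_num
      _ ≤ n * n ^ 6 := Nat.mul_le_mul (ha.trans hn) (Nat.pow_le_pow_left hn 6)
      _ = n ^ 7 := (pow_succ' n 6).symm
  have rpow_pow : ((n : ℝ) ^ ((1 : ℝ) - 1 / 8)) ^ 8 = (n : ℝ) ^ 7 := by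
    rw [← Real.rpow_natCast, ← Real.rpow_mul n.cast_nonneg, ← Real.rpow_natCast]
    norm_num
  refine le_of_pow_le_pow_left₀ (n := 8) (by norm_num) (by positivity) ?_
  rw [rpow_pow]
  exact_mod_cast pow_eight_le

end Parameters

section Events

open Finset

lemma one_sub_le_percProb {V : Type} [Fintype V] {G : SimpleGraph V} {p ε : ℝ}
    {P : SimpleGraph V → Prop}
    (hP : bernProb p (edgeFinset' G) (fun s => ¬ P (edgeGraph s)) ≤ ε) :
    1 - ε ≤ percProb G p P := by
  rw [bernProb_not] at hP
  exact sub_le_comm.1 hP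

variable {h m K q : ℕ} {X ι : Type} [Fintype X] [Fintype ι] {π : ι → Equiv.Perm X}
  {a : Fin (2 ^ h) × Fin K ↪ X}

lemma le_diam_component_stemVertex {s : Finset (Sym2 (Vertex h m K q X ι))}
    (hs : s ⊆ edgeFinset' (linkGraph m q π a)) {i : Fin K} {w : Vertex h m K q X ι}
    (hw : vertexDepth w = (m + 1) * h + m) (hreach : (edgeGraph s).Reachable (stemVertex i) w) :
    (m + 1) * h ≤
      ((edgeGraph s).induce ((edgeGraph s).connectedComponentMk (stemVertex i)).supp).diam := by
  have depth_le (u w) (huw : (edgeGraph s).Adj u w) : vertexDepth w ≤ vertexDepth u + 1 := by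
    rcases (mem_filter_univ _).1 (hs ((SimpleGraph.fromEdgeSet_adj _).1 huw).1) with link | link
    · exact link.vertexDepth_le.2
    · exact link.vertexDepth_le.1.trans (Nat.le_succ _)
  have depth_bound := le_add_diam_component depth_le hreach
  rw [hw, vertexDepth_stemVertex, add_comm] at depth_bound
  exact Nat.le_of_add_le_add_left depth_bound

lemma diam_linkGraph_le_of_card [DecidableEq X] (hh : 0 < h) (hπ : IsExpandingFamily π)
    (hX : Fintype.card X = 16 ^ h) (hmq : m + 2 * (q + 2) ≤ h) :
    (linkGraph m q π a).diam ≤ (m + 1) * h + (16 * (q + 3) + 1) * h := by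
  have hr : Fintype.card X * 2 ^ (8 * h) < 2 * 3 ^ (8 * h) :=
    calc Fintype.card X * 2 ^ (8 * h) = (16 * 2 ^ 8) ^ h := by rw [hX, pow_mul, ← mul_pow]
      _ ≤ (3 ^ 8) ^ h := Nat.pow_le_pow_left (by norm_num) h
      _ = 3 ^ (8 * h) := (pow_mul 3 8 h).symm
      _ < 2 * 3 ^ (8 * h) := lt_two_mul_self (by positivity)
  linarith [diam_linkGraph_le (m := m) (q := q) (a := a) hh hπ hr]

theorem one_sub_le_percProb_mul_diam_le [DecidableEq X] {p ε : ℝ} (hp0 : 0 ≤ p) (hp1 : p ≤ 1)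
    (hε : 0 < ε) (hη : (m + 1) * K * (1 - p) ^ K ≤ min (1 / 4) (ε / 2))
    (hm : 16 * (q + 3) + 1 ≤ ε * (m + 1)) (hh : 0 < h) (hmq : m + 2 * (q + 2) ≤ h)
    (hX : Fintype.card X = 16 ^ h) (hπ : IsExpandingFamily π) (i : Fin K) :
    1 - ε ≤ percProb (linkGraph m q π a) p fun H =>
      (1 - ε) * ((linkGraph m q π a).diam : ℝ) ≤
        ((H.induce (H.connectedComponentMk (stemVertex i)).supp).diam : ℝ) := by
  have diam_le : ((linkGraph m q π a).diam : ℝ) ≤ (1 + ε) * ((m + 1) * h : ℕ) := by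
    have slack := mul_le_mul_of_nonneg_right hm h.cast_nonneg
    have := Nat.cast_le (α := ℝ).2 (diam_linkGraph_le_of_card (q := q) (a := a) hh hπ hX hmq)
    push_cast at this ⊢
    linarith
  have long_le : (1 - ε) * ((linkGraph m q π a).diam : ℝ) ≤ ((m + 1) * h : ℕ) := by
    rcases le_total ((linkGraph m q π a).diam : ℝ) ((m + 1) * h : ℕ) with hle | hge
    · nlinarith [(linkGraph m q π a).diam.cast_nonneg (α := ℝ)]
    · nlinarith
  refine one_sub_le_percProb ((bernProb_mono hp0 hp1 fun s hs short => ?_).trans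
    ((bernProb_not_exists_reachable_le (q := q) (π := π) (a := a) hp0 hp1 hh
      (hη.trans (min_le_left _ _)) i).trans (by linarith [hη.trans (min_le_right _ _)])))
  rintro ⟨w, hw, hreach⟩
  exact short (long_le.trans (Nat.cast_le.2 (le_diam_component_stemVertex hs hw hreach)))

lemma card_base_le_card_vertex : Fintype.card X ≤ Fintype.card (Vertex h m K q X ι) :=
  Fintype.card_le_of_injective Vertex.base fun _ _ => Vertex.base.inj

theorem one_sub_le_percProb_card_compVerts_le {p ε : ℝ} (hp0 : 0 ≤ p) (hp1 : p ≤ 1)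
    (hpq : p ^ (q + 3) * (4 * Fintype.card ι) ≤ 1) {c : ℕ} (hc : 0 < c) (hcε : 2 / (c : ℝ) ^ 2 ≤ ε)
    (hX : Fintype.card X = 16 ^ h)
    (hch : ((m + 1) * K + (1 + 2 * Fintype.card ι * (q + 2)) * ((K + 2) * c)) ^ 8 ≤ 16 ^ h) :
    1 - ε ≤ percProb (linkGraph m q π a) p fun H => ∀ comp : H.ConnectedComponent,
      (#(compVerts H comp) : ℝ) ≤
        (Fintype.card (Vertex h m K q X ι) : ℝ) ^ ((1 : ℝ) - 1 / 8) := by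
  have tail : 2 * (Fintype.card X : ℝ) / (c * 4 ^ h : ℕ) ^ 2 = 2 / (c : ℝ) ^ 2 := by
    have sixteen_pow : (16 : ℝ) ^ h = (4 ^ h) ^ 2 := by rw [pow_right_comm]; norm_num
    rw [hX]
    push_cast
    rw [sixteen_pow, mul_pow, mul_div_mul_right _ _ (by positivity)]
  refine one_sub_le_percProb (le_trans ?_ ((bernProb_not_card_compVerts_le (m := m)
    (a := a) (π := π) hp0 hp1 hpq (M := c * 4 ^ h) (by positivity)).trans (tail.trans_le hcε)))
  refine bernProb_mono hp0 hp1 fun s _ => mt fun small comp => ?_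
  exact (Nat.cast_le.2 ((small comp).trans (card_bound_le h (m + 1) _ K c))).trans
    (mul_pow_le_rpow hch (hX ▸ card_base_le_card_vertex))

end Events

theorem exists_fin_of_equiv {V : Type} [Fintype V] [DecidableEq V] {n : ℕ} (e : V ≃ Fin n)
    {G : SimpleGraph V} {v : V} {b p ε δ : ℝ} {d : ℕ} (hG : IsExpander G b d)
    (hdiam : 1 - ε ≤ percProb G p (fun H =>
      (1 - ε) * (G.diam : ℝ) ≤ ((H.induce (H.connectedComponentMk v).supp).diam : ℝ)))
    (hcard : 1 - ε ≤ percProb G p (fun H => ∀ comp : H.ConnectedComponent,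
      ((compVerts H comp).card : ℝ) ≤ (n : ℝ) ^ (1 - δ))) :
    ∃ (G' : SimpleGraph (Fin n)) (v' : Fin n), IsExpander G' b d ∧
      1 - ε ≤ percProb G' p (fun H =>
        (1 - ε) * (G'.diam : ℝ) ≤ ((H.induce (H.connectedComponentMk v').supp).diam : ℝ)) ∧
      1 - ε ≤ percProb G' p (fun H => ∀ comp : H.ConnectedComponent,
        ((compVerts H comp).card : ℝ) ≤ (n : ℝ) ^ (1 - δ)) := by
  have card_iff (H : SimpleGraph V) (P : ℕ → Prop) :
      (∀ comp, P (compVerts (H.map e) comp).card) ↔ ∀ comp, P (compVerts H comp).card := by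
    let φ : H ≃g H.map e := SimpleGraph.Iso.map e H
    simp only [← φ.connectedComponentEquiv.forall_congr_right, card_compVerts_of_iso φ]
  have diam_component_eq (H : SimpleGraph V) :=
    SimpleGraph.Iso.map_apply e H v ▸ diam_component_of_iso (SimpleGraph.Iso.map e H) v
  refine ⟨G.map e, e v, hG.map e, ?_, ?_⟩
  · rw [percProb_map, diam_eq_of_iso (SimpleGraph.Iso.map e G)]
    simpa only [diam_component_eq] using hdiam
  · rw [percProb_map]
    simpa only [card_iff _ fun k => (k : ℝ) ≤ (n : ℝ) ^ (1 - δ)] using hcard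

theorem component_diameter_without_giant (ε p : ℝ) (hε : 0 < ε)
    (hp0 : 0 < p) (hp1 : p < 1) :
    ∃ b > (0:ℝ), ∃ d : ℕ, 0 < d ∧ ∃ δ > (0:ℝ), ∀ n₀ : ℕ, ∃ n ≥ n₀,
      ∃ (G : SimpleGraph (Fin n)) (v : Fin n), IsExpander G b d ∧
        1 - ε ≤ percProb G p (fun H =>
          (1 - ε) * (G.diam : ℝ) ≤
            ((H.induce (H.connectedComponentMk v).supp).diam : ℝ)) ∧
        1 - ε ≤ percProb G p (fun H =>
          ∀ comp : H.ConnectedComponent,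
            ((compVerts H comp).card : ℝ) ≤ (n : ℝ) ^ ((1 : ℝ) - δ)) := by
  obtain ⟨q, hq⟩ := exists_pow_add_mul_le_one hp0.le hp1 3
    (show 0 < 4 * (Fintype.card (Fin 30) : ℝ) by norm_num)
  obtain ⟨m, hm⟩ := exists_le_mul_succ hε (16 * (q + 3) + 1)
  obtain ⟨K, hK, hη⟩ := exists_mul_pow_le (c := m + 1) (sub_nonneg.2 hp1.le) (sub_lt_self 1 hp0)
    (show 0 < min (1 / 4) (ε / 2) by positivity)
  obtain ⟨c, hc, hcε⟩ := exists_div_sq_le hε 2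
  refine ⟨1 / (8 * (m + 1) + 2 + (2 * Fintype.card (Fin 30) + 1) * (q + 2) : ℕ), by positivity,
    4 * K + 2 * Fintype.card (Fin 30) + 2, by omega, 1 / 8, by norm_num, fun n₀ => ?_⟩
  obtain ⟨h, hh, hmq, hn₀, ha, hch⟩ := exists_height (m + 2 * (q + 2)) n₀ K
    (((m + 1) * K + (1 + 2 * Fintype.card (Fin 30) * (q + 2)) * ((K + 2) * c)) ^ 8)
  obtain ⟨π, hπ⟩ := exists_isExpandingFamily (Fin (16 ^ h))
  obtain ⟨a⟩ : Nonempty (Fin (2 ^ h) × Fin K ↪ Fin (16 ^ h)) :=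
    Function.Embedding.nonempty_of_card_le (by simpa using ha)
  exact ⟨_, (Fintype.card_fin (16 ^ h) ▸ hn₀).trans card_base_le_card_vertex,
    exists_fin_of_equiv (Fintype.equivFin _)
    (isExpander_linkGraph (m := m) (q := q) (a := a) hh hπ)
    (one_sub_le_percProb_mul_diam_le hp0.le hp1.le hε hη hm hh hmq (Fintype.card_fin _) hπ ⟨0, hK⟩)
    (one_sub_le_percProb_card_compVerts_le hp0.le hp1.le hq hc hcε (Fintype.card_fin _) hch)⟩

end Percolation

end
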